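/- arXiv:1711.07159 — 3 statements merged into one kernel-verified Lean document; each statement's English description precedes it below -/
import Mathlib

section
/- Let A be a finite-dimensional self-injective algebra over a field k, M a finite-dimensional faithful right A-module, and B = End_A(M). Then M is both projective and injective as a left B-module. -/
theorem ext_finite {R : Type*} [Ring R] {ι : Type*} [Finite ι] (S : ι → Type*)
    [∀ i, AddCommGroup (S i)] [∀ i, Module R (S i)] [∀ i, IsSimpleModule R (S i)]
    (s : ∀ i, S i) {T : Type*} [AddCommGroup T] [Module R T] [IsSimpleModule R T]
    (t : T) (ht : t ≠ 0) (h : ∀ r : R, (∀ i, r • s i = 0) → r • t = 0) :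
    ∃ i, Nonempty (T ≃ₗ[R] S i) := by
  let φ : R →ₗ[R] (∀ i, S i) := LinearMap.toSpanSingleton R _ s
  let ψ : R →ₗ[R] T := LinearMap.toSpanSingleton R _ t
  have hψ : Function.Surjective ψ := IsSimpleModule.toSpanSingleton_surjective R ht
  have hk : LinearMap.ker φ ≤ LinearMap.ker ψ := by
    intro r hr
    exact h r (fun i => congrFun (LinearMap.mem_ker.1 hr) i)
  let f0 : (R ⧸ LinearMap.ker φ) →ₗ[R] T := (LinearMap.ker φ).liftQ ψ hk
  let e := φ.quotKerEquivRange
  let f : LinearMap.range φ →ₗ[R] T := f0 ∘ₗ e.symm.toLinearMap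
  have hf : Function.Surjective f := by
    intro y
    obtain ⟨r, rfl⟩ := hψ y
    exact ⟨e (Submodule.Quotient.mk r), by simp [f, f0]⟩
  obtain ⟨g, hg⟩ := IsSemisimpleModule.lifting_property f hf LinearMap.id
  have hne : g t ≠ 0 := by
    intro h0
    apply ht
    have := LinearMap.congr_fun hg t
    simpa [h0] using this.symm
  have : ∃ i, (g t).1 i ≠ 0 := by
    by_contra! hc
    exact hne (Subtype.ext (funext hc))
  obtain ⟨i, hi⟩ := this
  let u : T →ₗ[R] S i := LinearMap.proj i ∘ₗ (LinearMap.range φ).subtype ∘ₗ g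
  have hu : u ≠ 0 := fun h0 => hi (by simpa [u] using LinearMap.congr_fun h0 t)
  exact ⟨i, ⟨LinearEquiv.ofBijective u (LinearMap.bijective_of_ne_zero hu)⟩⟩

theorem double_ann {R : Type*} [Ring R] [Module.Injective R R] {ι : Type*} [Fintype ι]
    (a : ι → R) (x : R) (h : ∀ t, (∀ i, t * a i = 0) → t * x = 0) :
    ∃ c : ι → R, x = ∑ i, a i * c i := by
  classical
  let φ : R →ₗ[R] (ι → R) := LinearMap.toSpanSingleton R _ a
  let ψ : R →ₗ[R] R := LinearMap.toSpanSingleton R _ x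
  have hk : LinearMap.ker φ ≤ LinearMap.ker ψ := by
    intro r hr
    exact h r (fun i => congrFun (LinearMap.mem_ker.1 hr) i)
  let j : (R ⧸ LinearMap.ker φ) →ₗ[R] (ι → R) := (LinearMap.ker φ).liftQ φ le_rfl
  have hj : Function.Injective j := by
    rw [← LinearMap.ker_eq_bot]
    exact Submodule.ker_liftQ_eq_bot _ _ _ le_rfl
  obtain ⟨g, hg⟩ := Module.Injective.extension_property R R _ _ j hj ((LinearMap.ker φ).liftQ ψ hk)
  refine ⟨fun i => g (Pi.single i 1), ?_⟩
  have := LinearMap.congr_fun hg (Submodule.Quotient.mk 1)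
  simp only [LinearMap.comp_apply] at this
  have h1 : j (Submodule.Quotient.mk 1) = a := by simp [j, φ]
  have h2 : ((LinearMap.ker φ).liftQ ψ hk) (Submodule.Quotient.mk 1) = x := by simp [ψ]
  rw [h1, h2, LinearMap.pi_apply_eq_sum_univ g a] at this
  rw [← this]
  refine Finset.sum_congr rfl fun i _ => ?_
  rw [smul_eq_mul]
  congr 2
  ext j; simp [Pi.single_apply, eq_comm]

theorem ann_iso {R : Type*} [Ring R] [IsArtinianRing R]
    {S T : Type*} [AddCommGroup T] [Module R T] [IsSimpleModule R T]
    [AddCommGroup S] [Module R S] [IsSimpleModule R S]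
    (h : Module.annihilator R S ≤ Module.annihilator R T) : Nonempty (T ≃ₗ[R] S) := by
  classical
  obtain ⟨F, hF⟩ := Finset.exists_inf_le (fun s : S => LinearMap.ker (LinearMap.toSpanSingleton R S s))
  have := IsSimpleModule.nontrivial R T
  obtain ⟨t, ht⟩ := exists_ne (0 : T)
  obtain ⟨_, e⟩ := ext_finite (R := R) (fun _ : F => S) (fun i => i.1) t ht (fun r hr => by
    have : r ∈ Module.annihilator R S := by
      rw [Module.mem_annihilator]
      intro s
      refine hF s ?_
      rw [Submodule.mem_finsetInf]
      intro i hi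
      exact hr ⟨i, hi⟩
    exact Module.mem_annihilator.1 (h this) t)
  exact e

theorem fin_classes {R : Type*} [Ring R] [IsArtinianRing R] {ι : Type*} (S : ι → Type*)
    [∀ i, AddCommGroup (S i)] [∀ i, Module R (S i)] [∀ i, IsSimpleModule R (S i)] :
    ∃ F : Finset ι, ∀ j, ∃ i ∈ F, Nonempty (S j ≃ₗ[R] S i) := by
  classical
  obtain ⟨F, hF⟩ := Finset.exists_inf_le
    (fun p : (Σ i, S i) => LinearMap.ker (LinearMap.toSpanSingleton R (S p.1) p.2))
  refine ⟨F.image Sigma.fst, fun j => ?_⟩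
  have := IsSimpleModule.nontrivial R (S j)
  obtain ⟨t, ht⟩ := exists_ne (0 : S j)
  obtain ⟨i, e⟩ := ext_finite (R := R) (fun p : F => S p.1.1) (fun p => p.1.2) t ht (fun r hr => by
    refine hF ⟨j, t⟩ ?_
    rw [Submodule.mem_finsetInf]
    intro i hi
    exact hr ⟨i, hi⟩)
  exact ⟨i.1.1, Finset.mem_image_of_mem _ i.2, e⟩

/-- The relation between a simple module `T` and the annihilator `Q` of its associated simple
left ideal. -/
def NuRel {R : Type*} [Ring R] (P Q : Ideal R) : Prop :=
  ∀ y ∈ P, ∀ z, (∀ q ∈ Q, q * z = 0) → z * y = 0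

theorem nu_inj {R : Type*} [Ring R] [IsArtinianRing R]
    {T T' : Type*} [AddCommGroup T] [Module R T] [IsSimpleModule R T]
    [AddCommGroup T'] [Module R T'] [IsSimpleModule R T']
    (Q : Ideal R) (z₀ : R) (hz₀ : z₀ ≠ 0) (hQ : ∀ q ∈ Q, q * z₀ = 0)
    (h : NuRel (Module.annihilator R T) Q) (h' : NuRel (Module.annihilator R T') Q) :
    Nonempty (T ≃ₗ[R] T') := by
  let W : Ideal R :=
    { carrier := {y | ∀ z, (∀ q ∈ Q, q * z = 0) → z * y = 0}
      add_mem' := fun {a b} ha hb z hz => by rw [mul_add, ha z hz, hb z hz, add_zero]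
      zero_mem' := fun z _ => mul_zero z
      smul_mem' := fun c x hx z hz => by
        rw [smul_eq_mul, ← mul_assoc]
        exact hx _ (fun q hq => by rw [← mul_assoc, hz q hq, zero_mul]) }
  have hW : W ≠ ⊤ := by
    intro hc
    have : (1 : R) ∈ W := hc ▸ Submodule.mem_top
    exact hz₀ (by simpa using this z₀ hQ)
  obtain ⟨m, hm, hWm⟩ := Ideal.exists_le_maximal W hW
  have : IsSimpleModule R (R ⧸ m) := isSimpleModule_iff_isCoatom.2 (Ideal.isMaximal_def.1 hm)
  have key : ∀ P : Ideal R, NuRel P Q → P ≤ Module.annihilator R (R ⧸ m) := by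
    intro P hP r hr
    rw [Module.mem_annihilator]
    intro u
    obtain ⟨u, rfl⟩ := Submodule.Quotient.mk_surjective _ u
    rw [← Submodule.Quotient.mk_smul, Submodule.Quotient.mk_eq_zero]
    refine hWm fun z hz => ?_
    rw [smul_eq_mul, ← mul_assoc, hP r hr z hz, zero_mul]
  obtain ⟨e⟩ := ann_iso (key _ h)
  obtain ⟨e'⟩ := ann_iso (key _ h')
  exact ⟨e.symm.trans e'⟩

theorem nu_exists (k : Type*) [Field k] {R : Type*} [Ring R] [Algebra k R] [FiniteDimensional k R]
    [IsArtinianRing R] [Module.Injective R R] (T : Type*) [AddCommGroup T] [Module R T]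
    [IsSimpleModule R T] :
    ∃ S : Submodule R R, IsSimpleModule R S ∧
      NuRel (Module.annihilator R T) (Module.annihilator R S) := by
  classical
  set P := Module.annihilator R T with hP
  have hPr : ∀ p ∈ P, ∀ r, p * r ∈ P := by
    intro p hp r
    rw [hP, Module.mem_annihilator] at hp ⊢
    intro t
    rw [mul_smul, hp]
  have hP1 : (1 : R) ∉ P := by
    have := IsSimpleModule.nontrivial R T
    obtain ⟨t, ht⟩ := exists_ne (0 : T)
    intro h
    exact ht (by simpa using Module.mem_annihilator.1 h t)
  let X : Submodule R R :=
    { carrier := {x | ∀ p ∈ P, x * p = 0}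
      add_mem' := fun {a b} ha hb p hp => by rw [add_mul, ha p hp, hb p hp, add_zero]
      zero_mem' := fun z _ => zero_mul z
      smul_mem' := fun c x hx p hp => by rw [smul_eq_mul, mul_assoc, hx p hp, mul_zero] }
  have spanning : ∀ I : Submodule R R, ∃ (n : ℕ) (a : Fin n → R), (∀ i, a i ∈ I) ∧
      ∀ t, (∀ i, t * a i = 0) → ∀ x ∈ I, t * x = 0 := by
    intro I
    let b := Module.finBasis k (I.restrictScalars k)
    refine ⟨_, fun i => (b i).1, fun i => (b i).2, fun t ht x hx => ?_⟩
    have h0 : (LinearMap.mulLeft k t) ∘ₗ (I.restrictScalars k).subtype = 0 :=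
      b.ext fun i => by simpa using ht i
    exact LinearMap.congr_fun h0 ⟨x, hx⟩
  have hX : X ≠ ⊥ := by
    intro hX
    obtain ⟨n, a, ha, hs⟩ := spanning P
    obtain ⟨c, hc⟩ := double_ann a 1 (fun t ht => by
      have : t ∈ X := fun p hp => hs t ht p hp
      rw [hX, Submodule.mem_bot] at this
      rw [this, zero_mul])
    exact hP1 (hc ▸ P.sum_mem fun i _ => hPr _ (ha i) _)
  obtain ⟨S, hS, hSX⟩ := (eq_bot_or_exists_atom_le X).resolve_left hX
  refine ⟨S, isSimpleModule_iff_isAtom.2 hS, ?_⟩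
  intro y hy z hz
  obtain ⟨n, a, ha, hs⟩ := spanning S
  obtain ⟨c, hc⟩ := double_ann a z (fun t ht => hz t (by
    rw [Module.mem_annihilator]
    intro s
    exact Subtype.ext (hs t ht s s.2)))
  rw [hc, Finset.sum_mul]
  refine Finset.sum_eq_zero fun i _ => ?_
  rw [mul_assoc]
  exact hSX (ha i) _ (P.mul_mem_left _ hy)

/-- Every simple module embeds in `R`. -/
theorem simple_embeds (k : Type*) [Field k] {R : Type*} [Ring R] [Algebra k R]
    [FiniteDimensional k R] [Module.Injective R R] (m : Ideal R) (hm : IsCoatom m) :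
    ∃ f : (R ⧸ m) →ₗ[R] R, Function.Injective f := by
  classical
  have : IsArtinianRing R := IsArtinianRing.of_finite k R
  let ι := {m : Ideal R // IsCoatom m}
  have inst : ∀ i : ι, IsSimpleModule R (R ⧸ i.1) := fun i => isSimpleModule_iff_isCoatom.2 i.2
  let st : Setoid ι :=
    { r := fun i j => Nonempty ((R ⧸ i.1) ≃ₗ[R] (R ⧸ j.1))
      iseqv := ⟨fun i => ⟨.refl _ _⟩, fun ⟨e⟩ => ⟨e.symm⟩, fun ⟨e⟩ ⟨e'⟩ => ⟨e.trans e'⟩⟩ }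
  have hg : ∀ i : ι, ∃ j : ι, ∃ S : Submodule R R, IsSimpleModule R S ∧
      Nonempty (S ≃ₗ[R] (R ⧸ j.1)) ∧
      NuRel (Module.annihilator R (R ⧸ i.1)) (Module.annihilator R S) := by
    intro i
    obtain ⟨S, hS, hn⟩ := nu_exists k (R := R) (R ⧸ i.1)
    obtain ⟨I, hI, e⟩ := isSimpleModule_iff_quot_maximal.1 hS
    exact ⟨⟨I, Ideal.isMaximal_def.1 hI⟩, S, hS, e, hn⟩
  choose g S hS he hn using hg
  have hfin : Finite (Quotient st) := by
    obtain ⟨F, hF⟩ := fin_classes (R := R) (fun i : ι => R ⧸ i.1)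
    refine Finite.of_surjective (fun i : F => (Quotient.mk st i.1)) ?_
    intro q
    induction q using Quotient.inductionOn with
    | _ j =>
      obtain ⟨i, hi, ⟨e⟩⟩ := hF j
      exact ⟨⟨i, hi⟩, Quotient.sound ⟨e.symm⟩⟩
  let G : Quotient st → Quotient st := fun q => Quotient.mk st (g q.out)
  have hG : Function.Injective G := by
    intro q q' h
    obtain ⟨e⟩ := Quotient.exact h
    rw [← q.out_eq, ← q'.out_eq]
    apply Quotient.sound
    obtain ⟨e1⟩ := he q.out
    obtain ⟨e2⟩ := he q'.out
    have hA := ((e1.trans e).trans e2.symm).annihilator_eq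
    have := hS q.out
    have := IsSimpleModule.nontrivial R (S q.out)
    obtain ⟨z, hz⟩ := exists_ne (0 : S q.out)
    exact nu_inj (Module.annihilator R (S q.out)) z.1 (fun h => hz (Subtype.ext h))
      (fun r hr => congrArg Subtype.val (Module.mem_annihilator.1 hr z)) (hn q.out)
      (hA ▸ hn q'.out)
  obtain ⟨q, hq⟩ := Finite.surjective_of_injective hG (Quotient.mk st ⟨m, hm⟩)
  obtain ⟨e⟩ := Quotient.exact hq
  obtain ⟨e1⟩ := he q.out
  let E := e1.trans e
  exact ⟨(S q.out).subtype ∘ₗ E.symm.toLinearMap,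
    (S q.out).subtype_injective.comp E.symm.injective⟩

/-- `R` is a cogenerator. -/
theorem cogen (k : Type*) [Field k] {R : Type*} [Ring R] [Algebra k R]
    [FiniteDimensional k R] [Module.Injective R R] {N : Type*} [AddCommGroup N] [Module R N]
    (x : N) (hx : x ≠ 0) : ∃ f : N →ₗ[R] R, f x ≠ 0 := by
  let φ := LinearMap.toSpanSingleton R N x
  have hk : LinearMap.ker φ ≠ ⊤ := by
    intro h
    have : (1 : R) ∈ LinearMap.ker φ := h ▸ Submodule.mem_top
    exact hx (by simpa [φ] using this)
  obtain ⟨m, hm, hle⟩ := Ideal.exists_le_maximal _ hk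
  obtain ⟨f, hf⟩ := simple_embeds k m (Ideal.isMaximal_def.1 hm)
  let j : (R ⧸ LinearMap.ker φ) →ₗ[R] N := (LinearMap.ker φ).liftQ φ le_rfl
  have hj : Function.Injective j := by
    rw [← LinearMap.ker_eq_bot]
    exact Submodule.ker_liftQ_eq_bot _ _ _ le_rfl
  obtain ⟨h, hh⟩ := Module.Injective.extension_property R R _ _ j hj
    (f ∘ₗ (LinearMap.ker φ).liftQ m.mkQ (by simpa using hle))
  refine ⟨h, fun h0 => ?_⟩
  have := LinearMap.congr_fun hh (Submodule.Quotient.mk 1)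
  have h1 : j (Submodule.Quotient.mk 1) = x := by simp [j, φ]
  simp only [LinearMap.comp_apply, h1, h0] at this
  have h2 := (map_eq_zero_iff f hf).1 this.symm
  simp only [Submodule.liftQ_apply, Submodule.mkQ_apply, Submodule.Quotient.mk_eq_zero] at h2
  exact hm.ne_top ((Ideal.eq_top_iff_one _).2 h2)

/-- The `k`-dual of `R` as a left `R`-module. -/
def DualMod (k R : Type*) [Field k] [Ring R] [Algebra k R] : Type _ := R →ₗ[k] k

namespace DualMod

variable (k R : Type*) [Field k] [Ring R] [Algebra k R]

instance : AddCommGroup (DualMod k R) := inferInstanceAs (AddCommGroup (R →ₗ[k] k))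
instance : Module k (DualMod k R) := inferInstanceAs (Module k (R →ₗ[k] k))
instance [FiniteDimensional k R] : FiniteDimensional k (DualMod k R) :=
  inferInstanceAs (FiniteDimensional k (R →ₗ[k] k))

/-- evaluation -/
def ev (x : R) : DualMod k R →ₗ[k] k := LinearMap.applyₗ (R := k) (M := R) (M₂ := k) x

variable {k R} in
/-- construct -/
def mk (f : R →ₗ[k] k) : DualMod k R := f

variable {k R} in
theorem ev_mk (f : R →ₗ[k] k) (x : R) : ev k R x (mk f) = f x := rfl

variable {k R} in
theorem ext' {d e : DualMod k R} (h : ∀ x, ev k R x d = ev k R x e) : d = e :=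
  LinearMap.ext (f := (d : R →ₗ[k] k)) (g := e) h

instance : SMul R (DualMod k R) := ⟨fun r d =>
  mk (LinearMap.comp (M₂ := R) (show R →ₗ[k] k from d) (LinearMap.mulRight k r))⟩

variable {k R} in
theorem ev_smul (r x : R) (d : DualMod k R) : ev k R x (r • d) = ev k R (x * r) d := rfl

theorem ev_add (x y : R) (d : DualMod k R) : ev k R (x + y) d = ev k R x d + ev k R y d :=
  LinearMap.map_add (show R →ₗ[k] k from d) x y

theorem ev_zero (d : DualMod k R) : ev k R 0 d = 0 :=
  LinearMap.map_zero (show R →ₗ[k] k from d)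

theorem ev_csmul (c : k) (x : R) (d : DualMod k R) : ev k R (c • x) d = c * ev k R x d :=
  LinearMap.map_smul (show R →ₗ[k] k from d) c x

instance : Module R (DualMod k R) where
  one_smul d := ext' fun x => by simp [ev_smul]
  mul_smul r s d := ext' fun x => by simp [ev_smul, mul_assoc]
  smul_zero r := ext' fun x => by simp [ev_smul]
  smul_add r d e := ext' fun x => by simp [ev_smul]
  add_smul r s d := ext' fun x => by simp [ev_smul, mul_add, ev_add]
  zero_smul d := ext' fun x => by simp [ev_smul, ev_zero]

instance : IsScalarTower k R (DualMod k R) :=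
  ⟨fun c r d => ext' fun x => by simp [ev_smul, ev_csmul]⟩

end DualMod

open DualMod in
theorem dual_split (k : Type*) [Field k] {R : Type*} [Ring R] [Algebra k R]
    [FiniteDimensional k R] [Module.Injective R R] (M : Type*) [AddCommGroup M] [Module k M]
    [Module R M] [IsScalarTower k R M] [FaithfulSMul R M] :
    ∃ (F : Finset (DualMod k R →ₗ[R] M)) (ψ : F → M →ₗ[k] k),
      ∀ d, ∑ a : F, ψ a (a.1 d) = ev k R 1 d := by
  classical
  obtain ⟨F, hF⟩ := Finset.exists_inf_le
    (fun a : DualMod k R →ₗ[R] M => LinearMap.ker (a.restrictScalars k))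
  let j : DualMod k R →ₗ[k] (F → M) := LinearMap.pi fun a => a.1.restrictScalars k
  have hj : LinearMap.ker j = ⊥ := by
    rw [eq_bot_iff]
    intro d hd
    rw [Submodule.mem_bot]
    by_contra hne
    obtain ⟨f, hf⟩ := cogen k (R := R) d hne
    have : ∃ m : M, f d • m ≠ 0 := by
      by_contra! hc
      exact hf (FaithfulSMul.eq_of_smul_eq_smul (α := M) fun m => by rw [hc, zero_smul])
    obtain ⟨m, hm⟩ := this
    refine hm (hF (LinearMap.toSpanSingleton R M m ∘ₗ f) (x := d) ?_)
    rw [Submodule.mem_finsetInf]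
    intro a ha
    exact congrFun (LinearMap.mem_ker.1 hd) ⟨a, ha⟩
  obtain ⟨g, hg⟩ := j.exists_leftInverse_of_injective hj
  refine ⟨F, fun a => ev k R 1 ∘ₗ g ∘ₗ LinearMap.single k (fun _ => M) a, fun d => ?_⟩
  have h1 : ∑ a : F, Pi.single a (a.1 d) = j d := by
    simp only [Finset.univ_sum_single (f := fun a : F => a.1 d)]
    rfl
  simp only [LinearMap.comp_apply, LinearMap.coe_single]
  rw [← map_sum, ← map_sum, h1]
  exact congrArg _ (LinearMap.congr_fun hg d)

open DualMod in
theorem inj_part (k : Type*) [Field k] {R : Type*} [Ring R] [Algebra k R]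
    [FiniteDimensional k R] [Module.Injective R R] (M : Type*) [AddCommGroup M] [Module k M]
    [Module R M] [IsScalarTower k R M] [FaithfulSMul R M] [FiniteDimensional k M] :
    Module.Injective (Module.End R M) M := by
  classical
  have : SMulCommClass R k M := IsScalarTower.to_smulCommClass'
  have : SMulCommClass k R M := SMulCommClass.symm _ _ _
  apply Module.Baer.injective
  intro I g
  obtain ⟨F, ψ, hψ⟩ := dual_split k (R := R) M
  -- `hat u : M → DR`
  let hat : Module.Dual k M → (M →ₗ[R] DualMod k R) := fun u =>
    { toFun := fun m => mk (u ∘ₗ (LinearMap.toSpanSingleton R M m).restrictScalars k)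
      map_add' := fun m m' => ext' fun x => by simp [ev_mk]
      map_smul' := fun r m => ext' fun x => by simp [ev_mk, ev_smul, mul_smul] }
  have hat_ev : ∀ u m x, ev k R x (hat u m) = u (x • m) := fun u m x => rfl
  have hat_add : ∀ u v, hat (u + v) = hat u + hat v := fun u v =>
    LinearMap.ext fun m => ext' fun x => by simp [hat_ev]
  have hat_smul : ∀ (c : k) u, hat (c • u) = c • hat u := fun c u =>
    LinearMap.ext fun m => ext' fun x => by
      rw [LinearMap.smul_apply, map_smul, hat_ev, hat_ev]; rfl
  let g' : I.restrictScalars k →ₗ[k] M :=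
    { toFun := fun x => g ⟨x.1, x.2⟩
      map_add' := fun x y => g.map_add ⟨x.1, x.2⟩ ⟨y.1, y.2⟩
      map_smul' := fun c x => by
        have := g.map_smul (algebraMap k (Module.End R M) c) ⟨x.1, x.2⟩
        refine Eq.trans (congrArg g (Subtype.ext ?_)) this
        exact Algebra.smul_def c x.1 }
  choose χ hχ using fun a : F => LinearMap.exists_extend ((ψ a) ∘ₗ g')
  let Φ : Module.Dual k (Module.Dual k M) :=
    { toFun := fun u => ∑ a : F, χ a (a.1 ∘ₗ hat u)
      map_add' := fun u v => by
        simp [hat_add, LinearMap.comp_add, Finset.sum_add_distrib]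
      map_smul' := fun c u => by
        simp only [hat_smul, RingHom.id_apply, Finset.smul_sum]
        refine Finset.sum_congr rfl fun a _ => ?_
        rw [← map_smul]
        congr 1
        ext m
        exact (a.1.restrictScalars k).map_smul c (hat u m) }
  let m₀ := (Module.evalEquiv k M).symm Φ
  have hm₀ : ∀ u : Module.Dual k M, u m₀ = ∑ a : F, χ a (a.1 ∘ₗ hat u) := by
    intro u
    have : Module.evalEquiv k M m₀ = Φ := (Module.evalEquiv k M).apply_symm_apply Φ
    exact LinearMap.congr_fun this u
  refine ⟨LinearMap.toSpanSingleton _ M m₀, fun b hb => ?_⟩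
  rw [LinearMap.toSpanSingleton_apply]
  refine (Module.forall_dual_apply_eq_zero_iff k _).1 ?_ |> sub_eq_zero.1
  intro u
  rw [map_sub, sub_eq_zero]
  have h1 : u (b • m₀) = (u ∘ₗ b.restrictScalars k) m₀ := rfl
  rw [h1, hm₀]
  have h2 : hat (u ∘ₗ b.restrictScalars k) = hat u ∘ₗ b :=
    LinearMap.ext fun m => ext' fun x => by simp [hat_ev]
  rw [h2]
  have h3 : ∀ a : F, χ a (a.1 ∘ₗ hat u ∘ₗ b) = ψ a (a.1 (hat u (g ⟨b, hb⟩))) := by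
    intro a
    have hmem : ((a.1 ∘ₗ hat u : Module.End R M) * b) ∈ I := I.mul_mem_left _ hb
    have := LinearMap.congr_fun (hχ a) ⟨_, hmem⟩
    refine this.trans ?_
    have h4 := g.map_smul (a.1 ∘ₗ hat u : Module.End R M) ⟨b, hb⟩
    exact congrArg (ψ a) h4
  rw [Finset.sum_congr rfl fun a _ => h3 a, hψ, hat_ev, one_smul]

theorem proj_part (k : Type*) [Field k] {R : Type*} [Ring R] [Algebra k R]
    [Module.Injective R R] (M : Type*) [AddCommGroup M] [Module k M]
    [Module R M] [IsScalarTower k R M] [FaithfulSMul R M] [FiniteDimensional k M] :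
    Module.Projective (Module.End R M) M := by
  classical
  have : SMulCommClass R k M := IsScalarTower.to_smulCommClass'
  let b := Module.finBasis k M
  let j : R →ₗ[R] (Fin (Module.finrank k M) → M) := LinearMap.toSpanSingleton R _ b
  have hj : Function.Injective j := by
    intro r s h
    refine FaithfulSMul.eq_of_smul_eq_smul (α := M) fun m => ?_
    have : (DistribSMul.toLinearMap k M r) = (DistribSMul.toLinearMap k M s) :=
      b.ext fun i => congrFun h i
    exact LinearMap.congr_fun this m
  obtain ⟨p, hp⟩ := Module.Injective.extension_property R R _ _ j hj LinearMap.id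
  let f : Fin (Module.finrank k M) → (M →ₗ[R] R) := fun i => p ∘ₗ LinearMap.single R (fun _ => M) i
  have hf : ∑ i, f i (b i) = 1 := by
    simp only [f, LinearMap.comp_apply, LinearMap.coe_single]
    rw [← map_sum, Finset.univ_sum_single]
    have := LinearMap.congr_fun hp 1
    simpa [j] using this
  let i₁ : M →ₗ[Module.End R M] (Fin (Module.finrank k M) → Module.End R M) :=
    { toFun := fun m i => LinearMap.toSpanSingleton R M m ∘ₗ f i
      map_add' := fun m m' => by ext i x; simp
      map_smul' := fun c m => by ext i x; simp }
  let s₁ : (Fin (Module.finrank k M) → Module.End R M) →ₗ[Module.End R M] M :=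
    { toFun := fun c => ∑ i, c i (b i)
      map_add' := fun c d => by simp [Finset.sum_add_distrib]
      map_smul' := fun c d => by simp }
  refine Module.Projective.of_split i₁ s₁ (LinearMap.ext fun m => ?_)
  change ∑ i, f i (b i) • m = m
  rw [← Finset.sum_smul, hf, one_smul]

/-- Let `A` be a finite-dimensional self-injective algebra over a field `k`,
`M` a finite-dimensional faithful right `A`-module, and `B = End_A(M)` acting on `M` on the
left by evaluation.  Then `M` is both projective and injective as a left `B`-module. -/
theorem stmt_5 (k : Type*) [Field k] (A : Type*) [Ring A] [Algebra k A]
    [FiniteDimensional k A] [Module.Injective Aᵐᵒᵖ A]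
    (M : Type*) [AddCommGroup M] [Module k M] [Module Aᵐᵒᵖ M]
    [IsScalarTower k Aᵐᵒᵖ M] [FiniteDimensional k M] [FaithfulSMul Aᵐᵒᵖ M] :
    Module.Projective (Module.End Aᵐᵒᵖ M) M ∧ Module.Injective (Module.End Aᵐᵒᵖ M) M := by
  have : FiniteDimensional k Aᵐᵒᵖ := Module.Finite.equiv (MulOpposite.opLinearEquiv k)
  have : Module.Injective Aᵐᵒᵖ Aᵐᵒᵖ := by
    let e : A ≃ₗ[Aᵐᵒᵖ] Aᵐᵒᵖ :=
      { MulOpposite.opAddEquiv with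
        map_smul' := fun r a => by
          change MulOpposite.op (r • a) = r * MulOpposite.op a
          rfl }
    exact (Module.Baer.of_equiv e (Module.Baer.of_injective inferInstance)).injective
  exact ⟨proj_part k M, inj_part k M⟩
end

section
/- Let A be a finite-dimensional self-injective algebra, M a finite-dimensional faithful right A-module, B = End_A(M), and let ^∨M = Hom_B(_B M, B) be the left dual. Then (A, B) satisfies the double centralizer property on ^∨M: End_A(^∨M) ≅ B and End_B(^∨M) ≅ A. -/
open MulOpposite

namespace S9

theorem exists_fin_ker {R X Y ι : Type*} [Ring R] [AddCommGroup X] [Module R X] [AddCommGroup Y]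
    [Module R Y] [IsArtinian R X] (f : ι → X →ₗ[R] Y) :
    ∃ s : Finset ι, ∀ x, (∀ i ∈ s, f i x = 0) → ∀ i, f i x = 0 := by
  classical
  obtain ⟨K, ⟨s, rfl⟩, hs⟩ := IsArtinian.set_has_minimal
    (Set.range fun s : Finset ι => s.inf fun i => LinearMap.ker (f i)) ⟨_, ⟨∅, rfl⟩⟩
  refine ⟨s, fun x hx i => ?_⟩
  have h1 := hs _ ⟨insert i s, rfl⟩
  simp only [Finset.inf_insert] at h1
  have h2 : s.inf (fun i => LinearMap.ker (f i)) ≤ LinearMap.ker (f i) := by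
    by_contra h
    exact h1 (lt_of_le_of_ne inf_le_right fun e => h (inf_eq_right.1 e))
  apply h2
  simp only [Submodule.mem_finsetInf, LinearMap.mem_ker]
  exact hx

section
variable {A : Type*} [Ring A]

def Ext (A : Type*) [Ring A] : Prop := Module.Baer Aᵐᵒᵖ A

theorem ext0 (hA : Ext A) {X Y : Type*} [AddCommGroup X] [Module Aᵐᵒᵖ X] [AddCommGroup Y]
    [Module Aᵐᵒᵖ Y] (f : X →ₗ[Aᵐᵒᵖ] Y) (g : X →ₗ[Aᵐᵒᵖ] A) (h : ∀ x, f x = 0 → g x = 0) :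
    ∃ h : Y →ₗ[Aᵐᵒᵖ] A, ∀ x, h (f x) = g x := by
  have hle : LinearMap.ker f ≤ LinearMap.ker g := fun x hx => h x hx
  obtain ⟨u, hu⟩ := Module.Baer.extension_property hA ((LinearMap.ker f).liftQ f le_rfl)
    (LinearMap.ker_eq_bot.1 (Submodule.ker_liftQ_eq_bot _ _ _ le_rfl))
    ((LinearMap.ker f).liftQ g hle)
  refine ⟨u, fun x => ?_⟩
  have := LinearMap.congr_fun hu (Submodule.Quotient.mk x)
  simpa using this

theorem ext1 (hA : Ext A) {X Y ι : Type*} [AddCommGroup X] [Module Aᵐᵒᵖ X] [AddCommGroup Y]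
    [Module Aᵐᵒᵖ Y] (f : ι → X →ₗ[Aᵐᵒᵖ] Y) (s : Finset ι)
    (g : X →ₗ[Aᵐᵒᵖ] A) (h : ∀ x, (∀ i ∈ s, f i x = 0) → g x = 0) :
    ∃ h : s → Y →ₗ[Aᵐᵒᵖ] A, ∀ x, g x = ∑ i : s, h i (f i x) := by
  classical
  obtain ⟨u, hu⟩ := ext0 hA (LinearMap.pi fun i : s => f i) g (fun x hx => h x fun i hi =>
    congrFun hx ⟨i, hi⟩)
  refine ⟨fun i => u ∘ₗ LinearMap.single Aᵐᵒᵖ (fun _ : s => Y) i, fun x => ?_⟩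
  rw [← hu]
  simp only [LinearMap.comp_apply]
  rw [← map_sum]
  congr 1
  exact (LinearMap.sum_single_apply _ _).symm

theorem lin_apply (f : A →ₗ[Aᵐᵒᵖ] A) (a : A) : f a = f 1 * a := by
  have := f.map_smul (op a) 1
  simpa using this

def rmul {N : Type*} [AddCommGroup N] [Module Aᵐᵒᵖ N] (n : N) : A →ₗ[Aᵐᵒᵖ] N where
  toFun a := op a • n
  map_add' a b := by simp [add_smul]
  map_smul' c a := by simp [mul_smul]

@[simp] theorem rmul_apply {N : Type*} [AddCommGroup N] [Module Aᵐᵒᵖ N] (n : N) (a : A) :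
    rmul n a = op a • n := rfl

theorem trace_mem (hA : Ext A) [IsArtinian Aᵐᵒᵖ A] {N : Type*} [AddCommGroup N] [Module Aᵐᵒᵖ N]
    (y : A) (hy : ∀ a : A, (∀ n : N, op a • n = 0) → y * a = 0) :
    ∃ (s : Finset N) (ψ : s → N →ₗ[Aᵐᵒᵖ] A), y = ∑ i : s, ψ i i := by
  obtain ⟨s, hs⟩ := exists_fin_ker (fun n : N => (rmul n : A →ₗ[Aᵐᵒᵖ] N))
  obtain ⟨ψ, hψ⟩ := ext1 hA (fun n : N => (rmul n : A →ₗ[Aᵐᵒᵖ] N)) s (rmul y) (fun a ha => by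
    simpa using hy a (fun n => by simpa using hs a ha n))
  refine ⟨s, ψ, ?_⟩
  simpa using hψ 1

def lann (K : Submodule Aᵐᵒᵖ A) : Submodule Aᵐᵒᵖ A where
  carrier := {a | ∀ c, ∀ x ∈ K, a * c * x = 0}
  zero_mem' := by simp
  add_mem' := by
    intro a b ha hb c x hx
    simp [add_mul, ha c x hx, hb c x hx]
  smul_mem' := by
    intro d a ha c x hx
    have := ha (d.unop * c) x hx
    simpa [mul_assoc] using this

def rann (K : Submodule Aᵐᵒᵖ A) : Submodule Aᵐᵒᵖ A where
  carrier := {a | ∀ x ∈ K, x * a = 0}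
  zero_mem' := by simp
  add_mem' := by
    intro a b ha hb x hx
    simp [mul_add, ha x hx, hb x hx]
  smul_mem' := by
    intro d a ha x hx
    have := ha x hx
    simp [← mul_assoc, this]

def Tw (K : Submodule Aᵐᵒᵖ A) : Prop := ∀ a, ∀ x ∈ K, a * x ∈ K

theorem mem_lann {K : Submodule Aᵐᵒᵖ A} (hK : Tw K) {a : A} :
    a ∈ lann K ↔ ∀ x ∈ K, a * x = 0 :=
  ⟨fun h x hx => by simpa using h 1 x hx, fun h c x hx => by
    rw [mul_assoc]; exact h _ (hK c x hx)⟩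

theorem mem_rann {K : Submodule Aᵐᵒᵖ A} {a : A} : a ∈ rann K ↔ ∀ x ∈ K, x * a = 0 := Iff.rfl

theorem tw_lann (K : Submodule Aᵐᵒᵖ A) : Tw (lann K) := by
  intro a x hx c y hy
  have := hx c y hy
  simp only [mul_assoc] at this ⊢
  simp [this]

theorem tw_rann (K : Submodule Aᵐᵒᵖ A) : Tw (rann K) := by
  intro a x hx y hy
  have := hx _ (K.smul_mem (op a) hy)
  simpa [mul_assoc] using this

theorem tw_inf {K L : Submodule Aᵐᵒᵖ A} (hK : Tw K) (hL : Tw L) : Tw (K ⊓ L) :=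
  fun a x hx => ⟨hK a x hx.1, hL a x hx.2⟩

theorem lann_rann (hA : Ext A) [IsArtinian Aᵐᵒᵖ A] {K : Submodule Aᵐᵒᵖ A} (hK : Tw K) :
    lann (rann K) = K := by
  apply le_antisymm
  · intro y hy
    rw [mem_lann (tw_rann K)] at hy
    obtain ⟨s, ψ, hs⟩ := trace_mem hA (N := K) y (fun a ha => hy a fun x hx => by
      simpa using congrArg Subtype.val (ha ⟨x, hx⟩))
    rw [hs]
    refine Submodule.sum_mem _ fun i _ => ?_
    obtain ⟨u, hu⟩ := ext0 hA K.subtype (ψ i) (fun x hx => by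
      have : x = 0 := Subtype.ext hx
      simp [this])
    rw [← hu, lin_apply]
    exact hK _ _ i.1.2
  · intro y hy
    rw [mem_lann (tw_rann K)]
    exact fun x hx => hx y hy

theorem lann_inf (hA : Ext A) {X Y : Submodule Aᵐᵒᵖ A} (hX : Tw X) (hY : Tw Y) :
    lann (X ⊓ Y) = lann X ⊔ lann Y := by
  apply le_antisymm
  · intro a ha
    rw [mem_lann (tw_inf hX hY)] at ha
    obtain ⟨u, hu⟩ := ext0 hA (X.mkQ.prod Y.mkQ) (rmul a) (fun x hx => by
      have h1 : x ∈ X ∧ x ∈ Y := by simpa using hx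
      simpa using ha x h1)
    have e : a = u (X.mkQ 1, 0) + u (0, Y.mkQ 1) := by
      rw [← map_add]
      have := hu 1
      simp at this ⊢
      exact this.symm
    rw [e]
    refine Submodule.add_mem_sup ((mem_lann hX).2 fun x hx => ?_) ((mem_lann hY).2 fun x hx => ?_)
    · have h1 := u.map_smul (op x) (X.mkQ 1, 0)
      have h2 : op x • (X.mkQ 1, (0 : A ⧸ Y)) = 0 := by
        rw [Prod.smul_mk, ← map_smul]
        simpa using hx
      rw [h2] at h1
      simpa using h1.symm
    · have h1 := u.map_smul (op x) (0, Y.mkQ 1)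
      have h2 : op x • ((0 : A ⧸ X), Y.mkQ 1) = 0 := by
        rw [Prod.smul_mk, ← map_smul]
        simpa using hx
      rw [h2] at h1
      simpa using h1.symm
  · refine sup_le (fun a ha c x hx => ha c x hx.1) (fun a ha c x hx => ha c x hx.2)

theorem lann_sup (X Y : Submodule Aᵐᵒᵖ A) : lann (X ⊔ Y) = lann X ⊓ lann Y := by
  apply le_antisymm
  · exact fun a ha => ⟨fun c x hx => ha c x (Submodule.mem_sup_left hx),
      fun c x hx => ha c x (Submodule.mem_sup_right hx)⟩
  · rintro a ⟨h1, h2⟩ c x hx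
    obtain ⟨y, hy, z, hz, rfl⟩ := Submodule.mem_sup.1 hx
    rw [mul_add, h1 c y hy, h2 c z hz, add_zero]

def chain (P : Submodule Aᵐᵒᵖ A) : ℕ → Submodule Aᵐᵒᵖ A
  | 0 => P
  | n + 1 => rann (rann (chain P n))

theorem tw_chain {P : Submodule Aᵐᵒᵖ A} (hP : Tw P) : ∀ n, Tw (chain P n)
  | 0 => hP
  | _ + 1 => tw_rann _

def ch (P : Submodule Aᵐᵒᵖ A) : ℕ → Submodule Aᵐᵒᵖ A
  | 0 => P
  | n + 1 => ch P n ⊓ chain P (n + 1)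

theorem tw_ch {P : Submodule Aᵐᵒᵖ A} (hP : Tw P) : ∀ n, Tw (ch P n)
  | 0 => hP
  | n + 1 => tw_inf (tw_ch hP n) (tw_chain hP _)

theorem g_inf (hA : Ext A) {X Y : Submodule Aᵐᵒᵖ A} (hX : Tw X) (hY : Tw Y) :
    lann (lann (X ⊓ Y)) = lann (lann X) ⊓ lann (lann Y) := by
  rw [lann_inf hA hX hY, lann_sup]

theorem g_chain (hA : Ext A) [IsArtinian Aᵐᵒᵖ A] {P : Submodule Aᵐᵒᵖ A} (hP : Tw P) (n : ℕ) :
    lann (lann (chain P (n + 1))) = chain P n := by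
  rw [chain, lann_rann hA (tw_rann _), lann_rann hA (tw_chain hP n)]

theorem eq_top_of_lann (hA : Ext A) [IsArtinian Aᵐᵒᵖ A] {P : Submodule Aᵐᵒᵖ A} (hP : Tw P)
    (h0 : lann P = ⊥) : P = ⊤ := by
  have g0 : lann (lann P) = ⊤ := by
    rw [h0, eq_top_iff]
    rintro x - c y hy
    simp [(Submodule.mem_bot _).1 hy]
  have hg : ∀ n, lann (lann (ch P (n + 1))) = ch P n := by
    intro n
    induction n with
    | zero =>
      change lann (lann (P ⊓ chain P (0 + 1))) = P
      rw [g_inf hA hP (tw_chain hP _), g_chain hA hP, g0, top_inf_eq, chain]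
    | succ n ih =>
      rw [ch, g_inf hA (tw_ch hP _) (tw_chain hP _), g_chain hA hP, ih, ch]
  have hm : Antitone (ch P) := antitone_nat_of_succ_le fun n => inf_le_left
  obtain ⟨n, hn⟩ := IsArtinian.monotone_stabilizes (⟨fun n => OrderDual.toDual (ch P n), hm⟩ :
    ℕ →o (Submodule Aᵐᵒᵖ A)ᵒᵈ)
  replace hn : ch P n = ch P (n + 1) := hn (n + 1) (Nat.le_succ n)
  have h1 : ch P 0 = ch P 1 := by
    clear hm
    induction n with
    | zero => exact hn
    | succ n ih =>
      apply ih
      rw [← hg n, hn, hg (n + 1), hn]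
  have h2 := hg 0
  rw [← h1] at h2
  simpa [ch, g0] using h2.symm

theorem torsionless (hA : Ext A) [IsArtinian Aᵐᵒᵖ A] {M : Type*} [AddCommGroup M] [Module Aᵐᵒᵖ M]
    (x : M) (hx : ∀ φ : M →ₗ[Aᵐᵒᵖ] A, φ x = 0) : x = 0 := by
  let P : Submodule Aᵐᵒᵖ A :=
    { carrier := {a | ∀ c : A, op (c * a) • x = 0}
      zero_mem' := by simp
      add_mem' := by
        intro a b ha hb c
        simp [mul_add, add_smul, -op_mul, ha c, hb c]
      smul_mem' := by
        intro d a ha c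
        have := ha c
        rw [MulOpposite.smul_eq_mul_unop, ← mul_assoc, op_mul, mul_smul, this, smul_zero] }
  have hP : Tw P := by
    intro a y hy c
    have := hy (c * a)
    rwa [mul_assoc] at this
  have hl : lann P = ⊥ := by
    rw [eq_bot_iff]
    intro y hy
    rw [mem_lann hP] at hy
    obtain ⟨s, ψ, hs⟩ := trace_mem hA (N := Submodule.span Aᵐᵒᵖ {x}) y (fun a ha => hy a fun c => by
      have := congrArg Subtype.val (ha ⟨op c • x, Submodule.smul_mem _ _
        (Submodule.mem_span_singleton_self x)⟩)
      simpa [mul_smul] using this)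
    rw [Submodule.mem_bot, hs]
    refine Finset.sum_eq_zero fun i _ => ?_
    obtain ⟨u, hu⟩ := ext0 hA (Submodule.subtype _) (ψ i) (fun x hx => by
      have : x = 0 := Subtype.ext hx
      simp [this])
    rw [← hu]
    obtain ⟨c, hc⟩ := Submodule.mem_span_singleton.1 i.1.2
    rw [Submodule.subtype_apply, ← hc, map_smul, hx, smul_zero]
  have h1 : (1 : A) ∈ P := by rw [eq_top_of_lann hA hP hl]; trivial
  simpa using h1 1

theorem reflexive (hA : Ext A) [IsArtinian Aᵐᵒᵖ A] {M : Type*} [AddCommGroup M] [Module Aᵐᵒᵖ M]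
    [IsArtinian Aᵐᵒᵖ M] (F : (M →ₗ[Aᵐᵒᵖ] A) → A) (hadd : ∀ φ ψ, F (φ + ψ) = F φ + F ψ)
    (hsmul : ∀ (a : A) (φ φ' : M →ₗ[Aᵐᵒᵖ] A), (∀ m, φ' m = a * φ m) → F φ' = a * F φ) :
    ∃ m, ∀ φ, F φ = φ m := by
  classical
  obtain ⟨s, hs⟩ := exists_fin_ker (fun φ : M →ₗ[Aᵐᵒᵖ] A => φ)
  let e : M →ₗ[Aᵐᵒᵖ] (s → A) := LinearMap.pi fun i : s => i.1
  let v : s → A := fun i => F i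
  let F' : (M →ₗ[Aᵐᵒᵖ] A) →+ A := AddMonoidHom.mk' F hadd
  let lm : A → A →ₗ[Aᵐᵒᵖ] A := fun a => rmul a
  have key : ∀ h : (s → A) →ₗ[Aᵐᵒᵖ] A, F (h ∘ₗ e) = h v := by
    intro h
    let c : s → A := fun i => h (Pi.single i 1)
    have hc : ∀ w, h w = ∑ i, c i * w i := by
      intro w
      conv_lhs => rw [← Finset.univ_sum_single w]
      rw [map_sum]
      refine Finset.sum_congr rfl fun i _ => ?_
      exact lin_apply (h ∘ₗ LinearMap.single Aᵐᵒᵖ (fun _ : s => A) i) (w i)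
    have h2 : h ∘ₗ e = ∑ i : s, (lm (c i)) ∘ₗ i.1 := by
      ext m
      simp [hc, e, lm, LinearMap.sum_apply]
    rw [h2]
    change F' _ = _
    rw [map_sum, hc]
    refine Finset.sum_congr rfl fun i _ => hsmul _ _ _ fun m => ?_
    simp [lm]
  have hv : v ∈ LinearMap.range e := by
    rw [← Submodule.Quotient.mk_eq_zero]
    apply torsionless hA
    intro φ
    have := key (φ ∘ₗ (LinearMap.range e).mkQ)
    have h0 : (φ ∘ₗ (LinearMap.range e).mkQ) ∘ₗ e = 0 := by
      ext m
      have : (LinearMap.range e).mkQ (e m) = 0 := by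
        simp
      simp only [LinearMap.comp_apply, this, map_zero, LinearMap.zero_apply]
    rw [h0] at this
    have hz : F 0 = 0 := map_zero F'
    rw [hz] at this
    exact this.symm
  obtain ⟨m, hm⟩ := hv
  refine ⟨m, fun φ => ?_⟩
  obtain ⟨h, hh⟩ := ext0 hA e φ (fun x hx => hs x (fun i hi => congrFun hx ⟨i, hi⟩) φ)
  have : φ = h ∘ₗ e := by ext x; exact (hh x).symm
  rw [← hh, hm, ← key, ← this]

def dl {M : Type*} [AddCommGroup M] [Module Aᵐᵒᵖ M] (φ : M →ₗ[Aᵐᵒᵖ] A) :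
    M →ₗ[Module.End Aᵐᵒᵖ M] Module.End Aᵐᵒᵖ M where
  toFun x := rmul x ∘ₗ φ
  map_add' x y := by ext m; simp
  map_smul' b x := by ext m; simp

theorem dl_apply {M : Type*} [AddCommGroup M] [Module Aᵐᵒᵖ M] (φ : M →ₗ[Aᵐᵒᵖ] A) (x y : M) :
    dl φ x y = op (φ y) • x := rfl

theorem main (hA : Ext A) [IsArtinian Aᵐᵒᵖ A] {M : Type*} [AddCommGroup M] [Module Aᵐᵒᵖ M]
    [IsArtinian Aᵐᵒᵖ M] [FaithfulSMul Aᵐᵒᵖ M] :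
    (∀ b₁ b₂ : Module.End Aᵐᵒᵖ M,
      (∀ (g : M →ₗ[Module.End Aᵐᵒᵖ M] Module.End Aᵐᵒᵖ M) (m : M),
        g m * b₁ = g m * b₂) → b₁ = b₂) ∧
    (∀ T : (M →ₗ[Module.End Aᵐᵒᵖ M] Module.End Aᵐᵒᵖ M) →+
            (M →ₗ[Module.End Aᵐᵒᵖ M] Module.End Aᵐᵒᵖ M),
      (∀ (a : A) (g g' : M →ₗ[Module.End Aᵐᵒᵖ M] Module.End Aᵐᵒᵖ M),
        (∀ m : M, g' m = g ((op a) • m)) →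
          ∀ m : M, (T g') m = (T g) ((op a) • m)) →
      ∃ b : Module.End Aᵐᵒᵖ M, ∀ (g : M →ₗ[Module.End Aᵐᵒᵖ M] Module.End Aᵐᵒᵖ M)
        (m : M), (T g) m = g m * b) ∧
    (∀ a₁ a₂ : A,
      (∀ (g : M →ₗ[Module.End Aᵐᵒᵖ M] Module.End Aᵐᵒᵖ M) (m : M),
        g ((op a₁) • m) = g ((op a₂) • m)) → a₁ = a₂) ∧
    (∀ T : (M →ₗ[Module.End Aᵐᵒᵖ M] Module.End Aᵐᵒᵖ M) →+
            (M →ₗ[Module.End Aᵐᵒᵖ M] Module.End Aᵐᵒᵖ M),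
      (∀ (b : Module.End Aᵐᵒᵖ M) (g g' : M →ₗ[Module.End Aᵐᵒᵖ M] Module.End Aᵐᵒᵖ M),
        (∀ m : M, g' m = g m * b) → ∀ m : M, (T g') m = (T g) m * b) →
      ∃ a : A, ∀ (g : M →ₗ[Module.End Aᵐᵒᵖ M] Module.End Aᵐᵒᵖ M) (m : M),
        (T g) m = g ((op a) • m)) := by
  have uniq : ∀ a b : A, (∀ x : M, op a • x = op b • x) → a = b := fun a b h =>
    op_injective (FaithfulSMul.eq_of_smul_eq_smul h)
  obtain ⟨s, ψ, hs⟩ := trace_mem hA (N := M) 1 (fun a ha => by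
    rw [one_mul]
    exact uniq a 0 fun x => by simpa using ha x)
  obtain ⟨C, hC⟩ : ∃ C : (M →ₗ[Module.End Aᵐᵒᵖ M] Module.End Aᵐᵒᵖ M) → M →ₗ[Aᵐᵒᵖ] A,
      ∀ g x y, g x y = op (C g y) • x := by
    refine ⟨fun g => ∑ i : s, ψ i ∘ₗ g i, fun g x y => ?_⟩
    have hx : x = ∑ i : s, dl (ψ i) x • (i : M) := by
      have : x = op (1 : A) • x := by simp
      rw [hs, Finset.op_sum, Finset.sum_smul] at this
      exact this
    conv_lhs => rw [hx, map_sum]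
    simp only [map_smul, LinearMap.sum_apply, Finset.op_sum, Finset.sum_smul]
    rfl
  have Cdl : ∀ φ, C (dl φ) = φ := fun φ => LinearMap.ext fun y => uniq _ _ fun x => by
    rw [← hC, dl_apply]
  have dlC : ∀ g, dl (C g) = g := fun g => LinearMap.ext fun x => LinearMap.ext fun y => by
    rw [hC g, dl_apply]
  have tor : ∀ x y : M, (∀ φ : M →ₗ[Aᵐᵒᵖ] A, φ x = φ y) → x = y := fun x y h =>
    sub_eq_zero.1 (torsionless hA _ fun φ => by rw [map_sub, h, sub_self])
  refine ⟨fun b₁ b₂ h => ?_, fun T hT => ?_, fun a₁ a₂ h => ?_, fun T hT => ?_⟩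
  · ext y
    refine tor _ _ fun φ => uniq _ _ fun x => ?_
    exact LinearMap.congr_fun (h (dl φ) x) y
  · have key : ∀ y : M, ∃ m : M, ∀ φ : M →ₗ[Aᵐᵒᵖ] A, C (T (dl φ)) y = φ m := by
      intro y
      apply reflexive hA
      · intro φ φ'
        have : dl (φ + φ') = dl φ + dl φ' := by
          ext x z
          simp [dl_apply, add_smul]
        refine uniq _ _ fun x => ?_
        rw [op_add, add_smul, ← hC, ← hC, ← hC, this, map_add]
        rfl
      · intro a φ φ' h
        refine uniq _ _ fun x => ?_
        rw [op_mul, mul_smul, ← hC, ← hC]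
        rw [hT a (dl φ) (dl φ') (fun m => ?_) x]
        ext z
        simp [dl_apply, h, mul_smul]
    choose b hb using key
    refine ⟨⟨⟨b, fun x y => ?_⟩, fun a x => ?_⟩, fun g x => ?_⟩
    · refine tor _ _ fun φ => ?_
      rw [map_add, ← hb, ← hb, ← hb, map_add]
    · refine tor _ _ fun φ => ?_
      rw [map_smul, ← hb, ← hb, map_smul]
      rfl
    · ext y
      have h1 := hb y (C g)
      rw [dlC] at h1
      rw [hC, h1, ← hC]
      rfl
  · have h1 : ∀ (φ : M →ₗ[Aᵐᵒᵖ] A) y, a₁ * φ y = a₂ * φ y := fun φ y => uniq _ _ fun x => by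
      simpa [dl_apply, mul_smul] using LinearMap.congr_fun (h (dl φ) x) y
    rw [← mul_one a₁, ← mul_one a₂, hs, Finset.mul_sum, Finset.mul_sum]
    exact Finset.sum_congr rfl fun i _ => h1 _ _
  · refine ⟨∑ i : s, C (T (dl (ψ i))) i, fun g x => ?_⟩
    ext y
    rw [hC, hC g, ← mul_smul, ← op_mul]
    congr 2
    have hg : g = ∑ i : s, dl (ψ i ∘ₗ (rmul (i : M) ∘ₗ C g)) := by
      ext x y
      rw [hC]
      conv_lhs => rw [← one_mul (C g y), hs]
      simp [dl_apply, Finset.sum_mul, Finset.sum_smul, LinearMap.sum_apply]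
    refine uniq _ _ fun x => ?_
    rw [← hC]
    conv_lhs => rw [hg, map_sum]
    rw [Finset.sum_mul, Finset.op_sum, Finset.sum_smul, LinearMap.sum_apply, LinearMap.sum_apply]
    refine Finset.sum_congr rfl fun i _ => ?_
    rw [hT (rmul (i : M) ∘ₗ C g) (dl (ψ i)) _ (fun m => by ext z; rfl) x, Module.End.mul_apply, hC]
    simp

end

end S9

/-- Let `A` be a finite-dimensional self-injective algebra over a field `k`,
`M` a finite-dimensional faithful right `A`-module, `B = End_A(M)`, and
`^∨M = Hom_B(M, B)` the left dual, an `(A,B)`-bimodule with left `A`-action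
`(a·g)(m) = g(m·a)` and right `B`-action `(g·b)(m) = g(m)·b`.  Then `(A,B)` satisfies the
double centralizer property on `^∨M`: the canonical map `B → End_A(^∨M)` (acting via the
right `B`-action) and the canonical map `A → End_B(^∨M)` (acting via the left `A`-action)
are both bijective; i.e. `End_A(^∨M) ≅ B` and `End_B(^∨M) ≅ A`. -/
theorem stmt_9 (k : Type*) [Field k] (A : Type*) [Ring A] [Algebra k A]
    [FiniteDimensional k A] [Module.Injective Aᵐᵒᵖ A]
    (M : Type*) [AddCommGroup M] [Module k M] [Module Aᵐᵒᵖ M]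
    [IsScalarTower k Aᵐᵒᵖ M] [FiniteDimensional k M] [FaithfulSMul Aᵐᵒᵖ M] :
    -- `End_A(^∨M) ≅ B`: injectivity of b ↦ (g ↦ g·b) ...
    (∀ b₁ b₂ : Module.End Aᵐᵒᵖ M,
      (∀ (g : M →ₗ[Module.End Aᵐᵒᵖ M] Module.End Aᵐᵒᵖ M) (m : M),
        g m * b₁ = g m * b₂) → b₁ = b₂) ∧
    -- ... and surjectivity: every additive endomorphism of ^∨M commuting with the left
    -- A-action is right multiplication by some b ∈ B
    (∀ T : (M →ₗ[Module.End Aᵐᵒᵖ M] Module.End Aᵐᵒᵖ M) →+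
            (M →ₗ[Module.End Aᵐᵒᵖ M] Module.End Aᵐᵒᵖ M),
      (∀ (a : A) (g g' : M →ₗ[Module.End Aᵐᵒᵖ M] Module.End Aᵐᵒᵖ M),
        (∀ m : M, g' m = g ((op a) • m)) →
          ∀ m : M, (T g') m = (T g) ((op a) • m)) →
      ∃ b : Module.End Aᵐᵒᵖ M, ∀ (g : M →ₗ[Module.End Aᵐᵒᵖ M] Module.End Aᵐᵒᵖ M)
        (m : M), (T g) m = g m * b) ∧
    -- `End_B(^∨M) ≅ A`: injectivity of a ↦ (g ↦ a·g) ...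
    (∀ a₁ a₂ : A,
      (∀ (g : M →ₗ[Module.End Aᵐᵒᵖ M] Module.End Aᵐᵒᵖ M) (m : M),
        g ((op a₁) • m) = g ((op a₂) • m)) → a₁ = a₂) ∧
    -- ... and surjectivity: every additive endomorphism of ^∨M commuting with the right
    -- B-action is given by the left action of some a ∈ A
    (∀ T : (M →ₗ[Module.End Aᵐᵒᵖ M] Module.End Aᵐᵒᵖ M) →+
            (M →ₗ[Module.End Aᵐᵒᵖ M] Module.End Aᵐᵒᵖ M),
      (∀ (b : Module.End Aᵐᵒᵖ M) (g g' : M →ₗ[Module.End Aᵐᵒᵖ M] Module.End Aᵐᵒᵖ M),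
        (∀ m : M, g' m = g m * b) → ∀ m : M, (T g') m = (T g) m * b) →
      ∃ a : A, ∀ (g : M →ₗ[Module.End Aᵐᵒᵖ M] Module.End Aᵐᵒᵖ M) (m : M),
        (T g) m = g ((op a) • m)) := by
  have : IsArtinian Aᵐᵒᵖ A := isArtinian_of_tower k inferInstance
  have : IsArtinian Aᵐᵒᵖ M := isArtinian_of_tower k inferInstance
  exact S9.main (A := A) (M := M) (Module.Baer.of_injective (R := Aᵐᵒᵖ) (Q := A) inferInstance)
end

section
/- Let l ≥ n ≥ 0 and let λ ∈ P_n^l be determined by positions j_1 < ⋯ < j_n of its entries equal to 1, with y^λ = y_1^{l−j_1} ⋯ y_n^{l−j_n} in the cyclotomic nilHecke algebra NH_n^l. Then the derivation ∂ (with ∂(y_i) = y_i², ∂(ψ_i) = −y_i ψ_i − ψ_i y_{i+1}) preserves the two-sided ideal (NH_n^l)^{>μ} spanned by the cellular basis elements ψ_h* y^λ ψ_t over all partitions λ > μ in the dominance order and tableaux h, t of shape λ. -/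
/-! The cyclotomic nilHecke algebra `NH_n^l` over a field `k` of characteristic `p`,
presented by generators `y i` (`i < n`) and `ψ i` (`i + 1 < n`), the nilHecke relations,
and the cyclotomic relation `y_0^l = 0` (0-based indexing of the paper's `y_1^l = 0`). -/

namespace Stmt17

variable (k : Type*) [Field k]

def Yf (i : ℕ) : FreeAlgebra k (ℕ ⊕ ℕ) := FreeAlgebra.ι k (Sum.inl i)

def Pf (i : ℕ) : FreeAlgebra k (ℕ ⊕ ℕ) := FreeAlgebra.ι k (Sum.inr i)

/-- The defining relations of the cyclotomic nilHecke algebra `NH_n^l`. -/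
inductive Rel (l n : ℕ) : FreeAlgebra k (ℕ ⊕ ℕ) → FreeAlgebra k (ℕ ⊕ ℕ) → Prop
  | yy (i j : ℕ) : Rel l n (Yf k i * Yf k j) (Yf k j * Yf k i)
  | ypsi (i j : ℕ) (h1 : i ≠ j) (h2 : i ≠ j + 1) :
      Rel l n (Yf k i * Pf k j) (Pf k j * Yf k i)
  | yp (i : ℕ) (h : i + 1 < n) : Rel l n (Yf k i * Pf k i) (Pf k i * Yf k (i+1) + 1)
  | py (i : ℕ) (h : i + 1 < n) : Rel l n (Pf k i * Yf k i) (Yf k (i+1) * Pf k i + 1)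
  | psisq (i : ℕ) : Rel l n (Pf k i * Pf k i) 0
  | far (i j : ℕ) (h : i + 1 < j) : Rel l n (Pf k i * Pf k j) (Pf k j * Pf k i)
  | braid (i : ℕ) :
      Rel l n (Pf k i * Pf k (i+1) * Pf k i) (Pf k (i+1) * Pf k i * Pf k (i+1))
  | cyc : Rel l n (Yf k 0 ^ l) 0
  | ybound (i : ℕ) (h : n ≤ i) : Rel l n (Yf k i) 0
  | pbound (i : ℕ) (h : n ≤ i + 1) : Rel l n (Pf k i) 0

/-- The cyclotomic nilHecke algebra `NH_n^l`. -/
abbrev NHc (l n : ℕ) := RingQuot (Rel k l n)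

def y (l n i : ℕ) : NHc k l n := RingQuot.mkAlgHom k (Rel k l n) (Yf k i)

def psi (l n i : ℕ) : NHc k l n := RingQuot.mkAlgHom k (Rel k l n) (Pf k i)

/-- `ψ_{i₁}⋯ψ_{i_r}` along a list of indices. -/
def psiList (l n : ℕ) (L : List ℕ) : NHc k l n := (L.map (psi k l n)).prod

/-- A partition `λ ∈ P_n^l`, encoded by the (0-based) positions `j 0 < j 1 < ⋯ < j (n-1)`
of its entries equal to `1`. -/
def IsPos (l n : ℕ) (j : ℕ → ℕ) : Prop :=
  (∀ a b : ℕ, a < b → b < n → j a < j b) ∧ (∀ a : ℕ, a < n → j a < l)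

/-- `y^λ = y_0^{l−1−j₀} ⋯ y_{n-1}^{l−1−j_{n-1}}` (0-based form of
`y_1^{l−j_1} ⋯ y_n^{l−j_n}`). -/
def yLam (l n : ℕ) (j : ℕ → ℕ) : NHc k l n :=
  ((List.range n).map (fun i => y k l n i ^ (l - 1 - j i))).prod

/-- The `k`-th prefix sum of the 0-1 sequence determined by positions `j`:
the number of `i < n` with `j i < K`. -/
def pcount (n : ℕ) (j : ℕ → ℕ) (K : ℕ) : ℕ :=
  ((List.range n).filter (fun i => j i < K)).length

/-- Dominance: `λ > μ` (strictly) in the dominance order on `P_n^l`. -/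
def DomGT (n : ℕ) (lam mu : ℕ → ℕ) : Prop :=
  (∀ K : ℕ, pcount n mu K ≤ pcount n lam K) ∧ (∃ i : ℕ, i < n ∧ lam i ≠ mu i)

/-- The cell ideal `(NH_n^l)^{>μ}`: the span of the elements `ψ_h^* y^λ ψ_t` for
partitions `λ > μ`; since the `ψ_w`'s for `w ∈ S_n` are exactly the nonzero products of
the crossing generators, this is the span of all `(products of ψ's) · y^λ · (products
of ψ's)` with `λ > μ`. -/
def cellIdeal (l n : ℕ) (mu : ℕ → ℕ) : Submodule k (NHc k l n) :=
  Submodule.span k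
    { x | ∃ j : ℕ → ℕ, IsPos l n j ∧ DomGT n j mu ∧
      ∃ a b : List ℕ, x = psiList k l n a * yLam k l n j * psiList k l n b }

end Stmt17

namespace Stmt17

section rels
variable {k : Type*} [Field k] {l n : ℕ}

theorem r_yy (i j : ℕ) : y k l n i * y k l n j = y k l n j * y k l n i := by
  have := RingQuot.mkAlgHom_rel k (Rel.yy (k := k) (l := l) (n := n) i j)
  simpa [y, psi] using this

theorem r_ypsi (i j : ℕ) (h1 : i ≠ j) (h2 : i ≠ j + 1) :
    y k l n i * psi k l n j = psi k l n j * y k l n i := by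
  have := RingQuot.mkAlgHom_rel k (Rel.ypsi (k := k) (l := l) (n := n) i j h1 h2)
  simpa [y, psi] using this

theorem r_yp (i : ℕ) (h : i + 1 < n) :
    y k l n i * psi k l n i = psi k l n i * y k l n (i+1) + 1 := by
  have := RingQuot.mkAlgHom_rel k (Rel.yp (k := k) (l := l) (n := n) i h)
  simpa [y, psi] using this

theorem r_py (i : ℕ) (h : i + 1 < n) :
    psi k l n i * y k l n i = y k l n (i+1) * psi k l n i + 1 := by
  have := RingQuot.mkAlgHom_rel k (Rel.py (k := k) (l := l) (n := n) i h)
  simpa [y, psi] using this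

theorem r_psisq (i : ℕ) : psi k l n i * psi k l n i = 0 := by
  have := RingQuot.mkAlgHom_rel k (Rel.psisq (k := k) (l := l) (n := n) i)
  simpa [y, psi] using this

theorem r_cyc : y k l n 0 ^ l = 0 := by
  have := RingQuot.mkAlgHom_rel k (Rel.cyc (k := k) (l := l) (n := n))
  simpa [y, psi] using this

theorem r_ybound (i : ℕ) (h : n ≤ i) : y k l n i = 0 := by
  have := RingQuot.mkAlgHom_rel k (Rel.ybound (k := k) (l := l) (n := n) i h)
  simpa [y, psi] using this

theorem r_pbound (i : ℕ) (h : n ≤ i + 1) : psi k l n i = 0 := by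
  have := RingQuot.mkAlgHom_rel k (Rel.pbound (k := k) (l := l) (n := n) i h)
  simpa [y, psi] using this

end rels

section ring
variable {A : Type*} [Ring A]

/-- `s = zψ - ψz` intertwines. -/
theorem sq_one (u z q : A) (h1 : u * q = q * z + 1) (h2 : q * u = z * q + 1)
    (hq : q * q = 0) : (q * u - u * q) * (q * u - u * q) = 1 := by
  have e1 : q * u * (q * u) = q * u := by
    calc q * u * (q * u) = q * (u * q) * u := by noncomm_ring
      _ = (q * q) * z * u + q * u := by rw [h1]; noncomm_ring
      _ = q * u := by rw [hq]; simp
  have e2 : u * q * (u * q) = u * q := by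
    calc u * q * (u * q) = u * (q * u) * q := by noncomm_ring
      _ = u * z * (q * q) + u * q := by rw [h2]; noncomm_ring
      _ = u * q := by rw [hq]; simp
  have e3 : u * q * (q * u) = 0 := by
    calc u * q * (q * u) = u * (q * q) * u := by noncomm_ring
      _ = 0 := by rw [hq]; simp
  have e4 : q * u * (u * q) = q * u + u * q - 1 := by
    calc q * u * (u * q) = (z * q + 1) * (q * z + 1) := by rw [h1, h2]
      _ = z * (q * q) * z + z * q + q * z + 1 := by noncomm_ring
      _ = (z * q + 1) + (q * z + 1) - 1 := by rw [hq]; noncomm_ring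
      _ = _ := by rw [← h1, ← h2]
  calc (q * u - u * q) * (q * u - u * q)
      = q * u * (q * u) - q * u * (u * q) - u * q * (q * u) + u * q * (u * q) := by
        noncomm_ring
    _ = 1 := by rw [e1, e2, e3, e4]; noncomm_ring

theorem s_comm (u z q : A) (h1 : u * q = q * z + 1) (h2 : q * u = z * q + 1)
    (hc : u * z = z * u) : z * (q * u - u * q) = (q * u - u * q) * u := by
  have a1 : z * q * u = q * u * u - u := by
    have : z * q = q * u - 1 := by rw [h2]; simp
    rw [this]; noncomm_ring
  have a2 : z * u * q = u * q * u - u := by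
    have : z * q = q * u - 1 := by rw [h2]; simp
    rw [← hc, mul_assoc, this]; noncomm_ring
  calc z * (q * u - u * q) = z * q * u - z * u * q := by noncomm_ring
    _ = _ := by rw [a1, a2]; noncomm_ring

theorem z_pow (u z q : A) (h1 : u * q = q * z + 1) (h2 : q * u = z * q + 1)
    (hq : q * q = 0) (hc : u * z = z * u) (d : ℕ) :
    z ^ d = (q * u - u * q) * u ^ d * (q * u - u * q) := by
  have h : SemiconjBy (q * u - u * q) u z := (s_comm u z q h1 h2 hc).symm
  have h' := (h.pow_right d).eq
  rw [h', mul_assoc, sq_one u z q h1 h2 hq, mul_one]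

theorem z_pow' (u z q : A) (h1 : u * q = q * z + 1) (h2 : q * u = z * q + 1)
    (hq : q * q = 0) (hc : u * z = z * u) (d : ℕ) :
    z ^ d = - u ^ d + q * (u ^ (d+1) - u ^ d * z) + (u ^ (d+1) - u ^ d * z) * q
      - q * (u ^ (d+2) - u ^ (d+1) * z - u ^ (d+1) * z + u ^ d * z ^ 2) * q := by
  have s1 : q * u - u * q = - (1 - q * (u - z)) := by
    have : u * q - 1 = q * z := by rw [h1]; simp
    rw [mul_sub, ← this]; noncomm_ring
  have s2 : q * u - u * q = 1 - (u - z) * q := by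
    rw [h2]; noncomm_ring
  have hz := z_pow u z q h1 h2 hq hc d
  have hz' : z ^ d = (- (1 - q * (u - z))) * u ^ d * (1 - (u - z) * q) := by
    rw [← s1, ← s2]; exact hz
  have c1 : z * u ^ d = u ^ d * z := ((show Commute u z from hc).pow_left d).eq.symm
  have e1 : (u - z) * u ^ d = u ^ (d+1) - u ^ d * z := by
    rw [sub_mul, c1, pow_succ']
  have e2 : u ^ d * (u - z) = u ^ (d+1) - u ^ d * z := by
    rw [mul_sub, pow_succ]
  have e3 : (u - z) * u ^ d * (u - z)
      = u ^ (d+2) - u ^ (d+1) * z - u ^ (d+1) * z + u ^ d * z ^ 2 := by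
    rw [e1, sub_mul, mul_sub, mul_sub, mul_assoc (u ^ d), mul_assoc (u ^ d), ← hc, ← mul_assoc,
      ← pow_succ, ← pow_succ, ← pow_two]
    abel
  have e4 : (u ^ (d+1) - u ^ d * z) * q = u ^ d * (u - z) * q := by rw [e2]
  rw [e4, hz', ← e3, ← e1]
  noncomm_ring

theorem one_eq (u z q : A) (h1 : u * q = q * z + 1) (h2 : q * u = z * q + 1)
    (hq : q * q = 0) : 1 = u * q + q * u - q * u ^ 2 * q := by
  have : q * u ^ 2 * q = (q * u) * (u * q) := by noncomm_ring
  rw [this, h1, h2]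
  have : (z * q + 1) * (q * z + 1) = z * (q * q) * z + z * q + q * z + 1 := by noncomm_ring
  rw [this, hq]; noncomm_ring

variable {k : Type*} [Field k] [Algebra k A]

theorem abs_step (S : Submodule k A) (u z q c : A) (h1 : u * q = q * z + 1)
    (h2 : q * u = z * q + 1) (hq : q * q = 0) (hc : u * z = z * u)
    (hcq : c * q = q * c)
    (hl : ∀ x ∈ S, q * x ∈ S) (hr : ∀ x ∈ S, x * q ∈ S) (d : ℕ)
    (hS : ∀ i j, d ≤ i → (0 < i) → c * (u ^ i * z ^ j) ∈ S) : c * z ^ d ∈ S := by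
  rcases Nat.eq_zero_or_pos d with rfl | hd
  · have m1 := hS 1 0 (by omega) (by omega)
    have m2 := hS 2 0 (by omega) (by omega)
    simp only [pow_zero, mul_one, pow_one] at m1 m2 ⊢
    have : c = (c * u) * q + q * (c * u) - q * (c * u ^ 2) * q := by
      calc c = c * 1 := by simp
        _ = c * (u * q + q * u - q * u ^ 2 * q) := by rw [← one_eq u z q h1 h2 hq]
        _ = (c * u) * q + (c * q) * u - (c * q) * u ^ 2 * q := by noncomm_ring
        _ = _ := by rw [hcq]; noncomm_ring
    rw [this]
    exact S.sub_mem (S.add_mem (hr _ m1) (hl _ m1)) (hr _ (hl _ m2))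
  · have m0 := hS d 0 (by omega) (by omega)
    have m1 := hS (d+1) 0 (by omega) (by omega)
    have m2 := hS d 1 (by omega) (by omega)
    have m3 := hS (d+2) 0 (by omega) (by omega)
    have m4 := hS (d+1) 1 (by omega) (by omega)
    have m5 := hS d 2 (by omega) (by omega)
    simp only [pow_zero, mul_one, pow_one] at m0 m1 m2 m3 m4
    have : c * z ^ d = - (c * u ^ d) + q * (c * u ^ (d+1) - c * (u ^ d * z))
        + (c * u ^ (d+1) - c * (u ^ d * z)) * q
        - q * (c * u ^ (d+2) - c * (u ^ (d+1) * z) - c * (u ^ (d+1) * z)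
          + c * (u ^ d * z ^ 2)) * q := by
      rw [z_pow' u z q h1 h2 hq hc d]
      simp only [← mul_sub, ← mul_add]
      rw [mul_sub, mul_add, mul_add, ← mul_assoc q c, ← mul_assoc q c, ← hcq]
      simp only [mul_assoc, mul_neg]
    rw [this]
    exact S.sub_mem (S.add_mem (S.add_mem (S.neg_mem m0) (hl _ (S.sub_mem m1 m2)))
      (hr _ (S.sub_mem m1 m2)))
      (hr _ (hl _ (S.add_mem (S.sub_mem (S.sub_mem m3 m4) m4) m5)))

end ring

section main
variable {k : Type*} [Field k] {l n : ℕ}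

theorem y_pow_l (i : ℕ) : y k l n i ^ l = 0 := by
  induction i with
  | zero => exact r_cyc
  | succ i ih =>
    by_cases h : i + 1 < n
    · rw [z_pow _ _ _ (r_yp i h) (r_py i h) (r_psisq i) (r_yy _ _) l, ih]; simp
    · rcases Nat.eq_zero_or_pos l with hl | hl
      · have h1 : (1 : NHc k l n) = 0 := by
          have := r_cyc (k := k) (l := l) (n := n)
          rw [hl] at this ⊢
          simpa using this
        rw [← mul_one (_ ^ _), h1, mul_zero]
      · rw [r_ybound _ (by omega), zero_pow (by omega)]

/-- monomial along a list -/
def monL (k : Type*) [Field k] (l n : ℕ) (L : List ℕ) (f : ℕ → ℕ) : NHc k l n :=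
  (L.map (fun i => y k l n i ^ f i)).prod

theorem comm_monL (L : List ℕ) (f : ℕ → ℕ) (x : NHc k l n)
    (h : ∀ i ∈ L, Commute x (y k l n i ^ f i)) : Commute x (monL k l n L f) := by
  induction L with
  | nil => simp [monL]
  | cons a L ih =>
    simp only [monL, List.map_cons, List.prod_cons]
    exact (h a (by simp)).mul_right (ih (fun i hi => h i (by simp [hi])))

theorem comm_y_monL (L : List ℕ) (f : ℕ → ℕ) (i : ℕ) :
    Commute (y k l n i) (monL k l n L f) :=
  comm_monL L f _ (fun j _ => (show Commute _ _ from r_yy i j).pow_right _)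

theorem monL_add (L : List ℕ) (f g : ℕ → ℕ) :
    monL k l n L (fun i => f i + g i) = monL k l n L f * monL k l n L g := by
  induction L with
  | nil => simp [monL]
  | cons a L ih =>
    have hc := (comm_y_monL (k := k) (l := l) (n := n) L f a).pow_left (g a)
    simp only [monL, List.map_cons, List.prod_cons] at ih hc ⊢
    rw [ih, pow_add, mul_assoc, mul_assoc, ← mul_assoc (y k l n a ^ g a), hc.eq]
    simp only [mul_assoc]

theorem monL_zero (L : List ℕ) (f : ℕ → ℕ) (h : ∀ i ∈ L, f i = 0) :
    monL k l n L f = 1 := by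
  induction L with
  | nil => simp [monL]
  | cons a L ih =>
    have := ih (fun i hi => h i (by simp [hi]))
    simp only [monL, List.map_cons, List.prod_cons] at this ⊢
    rw [this, h a (by simp)]; simp

theorem monL_single (L : List ℕ) (hL : L.Nodup) (i c : ℕ) (hi : i ∈ L) :
    monL k l n L (fun m => if m = i then c else 0) = y k l n i ^ c := by
  induction L with
  | nil => simp at hi
  | cons a L ih =>
    rw [List.nodup_cons] at hL
    by_cases h : a = i
    · subst h
      have := monL_zero (k := k) (l := l) (n := n) L (fun m => if m = a then c else 0)
        (fun j hj => by
          have : j ≠ a := fun e => hL.1 (e ▸ hj)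
          simp [this])
      simp only [monL, List.map_cons, List.prod_cons] at this ⊢
      rw [this]; simp
    · have := ih hL.2 (by
        rcases List.mem_cons.1 hi with e | e
        · exact absurd e.symm h
        · exact e)
      simp only [monL, List.map_cons, List.prod_cons] at this ⊢
      rw [this]; simp [h]

/-- monomial -/
abbrev mon (k : Type*) [Field k] (l n : ℕ) (f : ℕ → ℕ) : NHc k l n :=
  monL k l n (List.range n) f

theorem mon_congr (f g : ℕ → ℕ) (h : ∀ i < n, f i = g i) : mon k l n f = mon k l n g := by
  unfold mon monL
  congr 1
  apply List.map_congr_left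
  intro i hi
  rw [h i (List.mem_range.1 hi)]

theorem mon_split (f : ℕ → ℕ) (i : ℕ) (h : i < n) :
    mon k l n f = mon k l n (fun m => if m = i then 0 else f m) * y k l n i ^ f i := by
  rw [← monL_single (List.range n) List.nodup_range i (f i) (List.mem_range.2 h), ← monL_add]
  apply mon_congr
  intro m _
  by_cases e : m = i <;> simp [e]

theorem mon_mul_y (f : ℕ → ℕ) (i : ℕ) (h : i < n) :
    mon k l n f * y k l n i = mon k l n (fun m => f m + if m = i then 1 else 0) := by
  have := monL_add (k := k) (l := l) (n := n) (List.range n) f (fun m => if m = i then 1 else 0)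
  rw [monL_single (List.range n) List.nodup_range i 1 (List.mem_range.2 h), pow_one] at this
  exact this.symm

theorem mon_eq_zero (f : ℕ → ℕ) (i : ℕ) (h : i < n) (hl : l ≤ f i) : mon k l n f = 0 := by
  rw [mon_split f i h, ← Nat.sub_add_cancel hl, pow_add, y_pow_l]; simp

/-- replace entries `i`, `i+1`. -/
def upd (f : ℕ → ℕ) (i a b : ℕ) : ℕ → ℕ :=
  fun m => if m = i then a else if m = i + 1 then b else f m

theorem mon_upd (f : ℕ → ℕ) (i a b : ℕ) (h : i + 1 < n) :
    mon k l n (upd f i a b)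
      = mon k l n (upd f i 0 0) * (y k l n i ^ a * y k l n (i+1) ^ b) := by
  rw [← monL_single (List.range n) List.nodup_range i a (List.mem_range.2 (by omega)),
    ← monL_single (List.range n) List.nodup_range (i+1) b (List.mem_range.2 (by omega)),
    ← monL_add, ← monL_add]
  apply mon_congr
  intro m _
  unfold upd
  split_ifs <;> omega

theorem comm_rest (f : ℕ → ℕ) (i : ℕ) : Commute (psi k l n i) (mon k l n (upd f i 0 0)) := by
  apply comm_monL
  intro m _
  unfold upd
  split_ifs with h1 h2
  · simp
  · simp
  · exact (show Commute _ _ from (r_ypsi m i h1 h2).symm).pow_right _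

theorem comm_sym (i a : ℕ) (h : i + 1 < n) :
    Commute (psi k l n i) (y k l n i ^ a * y k l n (i+1) ^ a) := by
  have h1 := r_yp (k := k) (l := l) i h
  have h2 := r_py (k := k) (l := l) i h
  have h3 := r_yy (k := k) (l := l) (n := n) i (i+1)
  rw [← (show Commute _ _ from h3).mul_pow]
  apply Commute.pow_right
  have e : psi k l n i * y k l n (i+1) = y k l n i * psi k l n i - 1 := by rw [h1]; simp
  show psi k l n i * (y k l n i * y k l n (i+1)) = y k l n i * y k l n (i+1) * psi k l n i
  rw [← mul_assoc, h2, add_mul, mul_assoc, e, h3, mul_sub]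
  simp [mul_assoc]

/-- step of the straightening -/
theorem mon_step (S : Submodule k (NHc k l n)) (f : ℕ → ℕ) (i : ℕ) (h : i + 1 < n)
    (hf : f i ≤ f (i+1))
    (hl : ∀ x ∈ S, psi k l n i * x ∈ S) (hr : ∀ x ∈ S, x * psi k l n i ∈ S)
    (hS : ∀ a b, f (i+1) ≤ a → f i ≤ b → f i < a → mon k l n (upd f i a b) ∈ S) :
    mon k l n f ∈ S := by
  have hcom : Commute (y k l n i) (y k l n (i+1)) := r_yy i (i+1)
  set c := mon k l n (upd f i 0 0) * (y k l n i ^ f i * y k l n (i+1) ^ f i) with hc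
  have key : ∀ p q, c * (y k l n i ^ p * y k l n (i+1) ^ q)
      = mon k l n (upd f i (f i + p) (f i + q)) := by
    intro p q
    rw [mon_upd f i _ _ h, hc, pow_add, pow_add, mul_assoc, mul_assoc, mul_assoc,
      ← mul_assoc (y k l n (i+1) ^ f i), ← (hcom.pow_pow p (f i)).eq]
    simp only [mul_assoc]
  have e : mon k l n f = c * y k l n (i+1) ^ (f (i+1) - f i) := by
    have := key 0 (f (i+1) - f i)
    rw [pow_zero, one_mul] at this
    rw [this]
    apply mon_congr
    intro m _
    unfold upd
    split_ifs with e1 e2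
    · rw [e1]; simp
    · rw [e2]; omega
    · rfl
  rw [e]
  refine abs_step S (y k l n i) _ (psi k l n i) c (r_yp i h) (r_py i h) (r_psisq i) (r_yy _ _)
    ((comm_rest f i).mul_right (comm_sym i (f i) h)).eq.symm hl hr _ ?_
  intro p q hp hp0
  rw [key]
  exact hS _ _ (by omega) (by omega) (by omega)

theorem pcount_eq (j : ℕ → ℕ) (K : ℕ) :
    pcount n j K = ((Finset.range n).filter (fun i => j i < K)).card := by
  unfold pcount
  rfl

theorem dom_of_le (j lam mu : ℕ → ℕ) (h : ∀ i < n, j i ≤ lam i) (hd : DomGT n lam mu) :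
    DomGT n j mu := by
  obtain ⟨h1, i, hi, hne⟩ := hd
  refine ⟨fun K => (h1 K).trans ?_, ?_⟩
  · rw [pcount_eq, pcount_eq]
    apply Finset.card_le_card
    intro m hm
    simp only [Finset.mem_filter, Finset.mem_range] at hm ⊢
    exact ⟨hm.1, (h m hm.1).trans_lt hm.2⟩
  · by_contra! hcon
    have hlt : mu i < lam i := lt_of_le_of_ne (by rw [← hcon i hi]; exact h i hi) (Ne.symm hne)
    have h2 := h1 (mu i + 1)
    rw [pcount_eq, pcount_eq] at h2
    refine absurd h2 (not_le.2 (Finset.card_lt_card ?_))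
    rw [Finset.ssubset_iff_of_subset]
    · exact ⟨i, by simp [hi], by simp; omega⟩
    · intro m hm
      simp only [Finset.mem_filter, Finset.mem_range] at hm ⊢
      have a1 := h m hm.1
      have a2 := hcon m hm.1
      omega

theorem I_psi_left (mu : ℕ → ℕ) (i : ℕ) :
    ∀ x ∈ cellIdeal k l n mu, psi k l n i * x ∈ cellIdeal k l n mu := by
  intro x hx
  refine Submodule.span_induction ?_ ?_ ?_ ?_ hx
  · rintro x ⟨j, h1, h2, a, b, rfl⟩
    exact Submodule.subset_span ⟨j, h1, h2, i :: a, b, by simp [psiList, mul_assoc]⟩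
  · simp
  · intro x z _ _ hx hz
    rw [mul_add]; exact Submodule.add_mem _ hx hz
  · intro c x _ hx
    rw [mul_smul_comm]; exact Submodule.smul_mem _ _ hx

theorem I_psi_right (mu : ℕ → ℕ) (i : ℕ) :
    ∀ x ∈ cellIdeal k l n mu, x * psi k l n i ∈ cellIdeal k l n mu := by
  intro x hx
  refine Submodule.span_induction ?_ ?_ ?_ ?_ hx
  · rintro x ⟨j, h1, h2, a, b, rfl⟩
    exact Submodule.subset_span ⟨j, h1, h2, a, b ++ [i], by simp [psiList, mul_assoc]⟩
  · simp
  · intro x z _ _ hx hz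
    rw [add_mul]; exact Submodule.add_mem _ hx hz
  · intro c x _ hx
    rw [smul_mul_assoc]; exact Submodule.smul_mem _ _ hx

theorem meas_lt (f : ℕ → ℕ) (i a b : ℕ) (h : i + 1 < n) (h1 : f (i+1) ≤ a) (h2 : f i ≤ b)
    (h3 : f i < a) (h4 : f i ≤ f (i+1)) :
    ∑ m ∈ Finset.range n, f m * (n - m) < ∑ m ∈ Finset.range n, upd f i a b m * (n - m) := by
  have hi : i ∈ Finset.range n := Finset.mem_range.2 (by omega)
  have hi' : i + 1 ∈ (Finset.range n).erase i := by simp; omega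
  rw [← Finset.add_sum_erase _ _ hi, ← Finset.add_sum_erase _ _ hi',
    ← Finset.add_sum_erase _ _ hi, ← Finset.add_sum_erase _ _ hi']
  have : ∑ m ∈ ((Finset.range n).erase i).erase (i+1), upd f i a b m * (n - m)
      = ∑ m ∈ ((Finset.range n).erase i).erase (i+1), f m * (n - m) := by
    apply Finset.sum_congr rfl
    intro m hm
    simp only [Finset.mem_erase] at hm
    simp [upd, hm.1, hm.2.1]
  rw [this]
  have u1 : upd f i a b i = a := by simp [upd]
  have u2 : upd f i a b (i+1) = b := by simp [upd]
  rw [u1, u2]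
  obtain ⟨w, hw⟩ : ∃ w, n - (i+1) = w := ⟨_, rfl⟩
  have hw' : n - i = w + 1 := by omega
  rw [hw, hw']
  obtain ⟨s, rfl⟩ := Nat.exists_eq_add_of_le h1
  obtain ⟨t, rfl⟩ := Nat.exists_eq_add_of_le h2
  nlinarith [Nat.zero_le (s * w), Nat.zero_le (t * w)]

theorem mon_mem (mu lam : ℕ → ℕ) (hlam : IsPos l n lam) (hd : DomGT n lam mu) :
    ∀ (N : ℕ) (f : ℕ → ℕ), (∀ m < n, l - 1 - lam m ≤ f m) →
      n * (l * n) < N + ∑ m ∈ Finset.range n, f m * (n - m) →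
      mon k l n f ∈ cellIdeal k l n mu := by
  intro N
  induction N with
  | zero =>
    intro f _ hN
    by_cases hz : ∃ i < n, l ≤ f i
    · obtain ⟨i, hi, hi'⟩ := hz
      rw [mon_eq_zero f i hi hi']; exact Submodule.zero_mem _
    · exfalso
      push Not at hz
      have : ∑ m ∈ Finset.range n, f m * (n - m) ≤ ∑ m ∈ Finset.range n, l * n := by
        apply Finset.sum_le_sum
        intro m hm
        exact Nat.mul_le_mul (hz m (Finset.mem_range.1 hm)).le (by omega)
      simp at this
      omega
  | succ N ih =>
    intro f hf hN
    by_cases hz : ∃ i < n, l ≤ f i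
    · obtain ⟨i, hi, hi'⟩ := hz
      rw [mon_eq_zero f i hi hi']; exact Submodule.zero_mem _
    push Not at hz
    by_cases hi : ∃ i, i + 1 < n ∧ f i ≤ f (i+1)
    · obtain ⟨i, hi, hle⟩ := hi
      refine mon_step _ f i hi hle (I_psi_left mu i) (I_psi_right mu i) ?_
      intro a b ha hb hab
      apply ih
      · intro m hm
        have l1 := hlam.1 i (i+1) (by omega) hi
        have l2 := hf i (by omega)
        unfold upd
        split_ifs with e1 e2
        · subst e1; omega
        · subst e2; omega
        · exact hf m hm
      · have := meas_lt f i a b hi ha hb hab hle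
        omega
    · push Not at hi
      have hdec : ∀ b, b < n → ∀ a, a < b → f b < f a := by
        intro b
        induction b with
        | zero => intro _ a ha; omega
        | succ b ihb =>
          intro hb a ha
          have h1 := hi b hb
          rcases Nat.lt_succ_iff_lt_or_eq.1 ha with h | h
          · exact h1.trans (ihb (by omega) a h)
          · rw [h]; exact h1
      apply Submodule.subset_span
      refine ⟨fun m => l - 1 - f m, ⟨?_, ?_⟩, ?_, [], [], ?_⟩
      · intro a b hab hb
        have := hdec b hb a hab
        have := hz a (by omega)
        show l - 1 - f a < l - 1 - f b
        omega
      · intro a ha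
        have := hz a ha
        show l - 1 - f a < l
        omega
      · apply dom_of_le _ lam mu _ hd
        intro m hm
        have := hf m hm
        have := hlam.2 m hm
        show l - 1 - f m ≤ lam m
        omega
      · simp only [psiList, List.map_nil, List.prod_nil, one_mul, mul_one]
        apply mon_congr
        intro m hm
        have := hz m hm
        show f m = l - 1 - (l - 1 - f m)
        omega

theorem mon_mem' (mu lam : ℕ → ℕ) (hlam : IsPos l n lam) (hd : DomGT n lam mu)
    (f : ℕ → ℕ) (hf : ∀ m < n, l - 1 - lam m ≤ f m) : mon k l n f ∈ cellIdeal k l n mu :=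
  mon_mem mu lam hlam hd (n * (l * n) + 1) f hf (by omega)

theorem yLam_mul_y (mu lam : ℕ → ℕ) (hlam : IsPos l n lam) (hd : DomGT n lam mu) (i : ℕ) :
    yLam k l n lam * y k l n i ∈ cellIdeal k l n mu := by
  by_cases h : i < n
  · have := mon_mul_y (k := k) (l := l) (fun m => l - 1 - lam m) i h
    change mon k l n (fun m => l - 1 - lam m) * y k l n i ∈ _
    rw [this]
    exact mon_mem' mu lam hlam hd _ (fun m _ => by simp)
  · rw [r_ybound i (by omega), mul_zero]; exact Submodule.zero_mem _

theorem y_mul_yLam (mu lam : ℕ → ℕ) (hlam : IsPos l n lam) (hd : DomGT n lam mu) (i : ℕ) :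
    y k l n i * yLam k l n lam ∈ cellIdeal k l n mu := by
  have := (comm_y_monL (k := k) (l := l) (n := n) (List.range n)
    (fun m => l - 1 - lam m) i).eq
  change y k l n i * monL k l n (List.range n) (fun m => l - 1 - lam m) ∈ _
  rw [this]
  exact yLam_mul_y mu lam hlam hd i

theorem I_psiList_left (mu : ℕ → ℕ) (a : List ℕ) :
    ∀ x ∈ cellIdeal k l n mu, psiList k l n a * x ∈ cellIdeal k l n mu := by
  induction a with
  | nil => intro x hx; simpa [psiList] using hx
  | cons i a ih =>
    intro x hx
    have := I_psi_left mu i _ (ih x hx)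
    simpa [psiList, mul_assoc] using this

theorem I_psiList_right (mu : ℕ → ℕ) (a : List ℕ) :
    ∀ x ∈ cellIdeal k l n mu, x * psiList k l n a ∈ cellIdeal k l n mu := by
  induction a with
  | nil => intro x hx; simpa [psiList] using hx
  | cons i a ih =>
    intro x hx
    have := ih _ (I_psi_right mu i x hx)
    simpa [psiList, mul_assoc] using this

theorem y_psiList (mu : ℕ → ℕ) (x : NHc k l n) (hx : x ∈ cellIdeal k l n mu)
    (hyx : ∀ m, y k l n m * x ∈ cellIdeal k l n mu) (a : List ℕ) :
    ∀ m, y k l n m * (psiList k l n a * x) ∈ cellIdeal k l n mu := by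
  induction a with
  | nil => intro m; simpa [psiList] using hyx m
  | cons i a ih =>
    intro m
    have hw := I_psiList_left mu a x hx
    have e : psiList k l n (i :: a) * x = psi k l n i * (psiList k l n a * x) := by
      simp [psiList, mul_assoc]
    rw [e]
    set w := psiList k l n a * x
    by_cases h : i + 1 < n
    · by_cases h1 : m = i
      · subst h1
        rw [← mul_assoc, r_yp m h, add_mul, one_mul, mul_assoc]
        exact Submodule.add_mem _ (I_psi_left mu _ _ (ih _)) hw
      · by_cases h2 : m = i + 1
        · subst h2
          have : y k l n (i+1) * psi k l n i = psi k l n i * y k l n i - 1 := by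
            rw [r_py i h]; simp
          rw [← mul_assoc, this, sub_mul, one_mul, mul_assoc]
          exact Submodule.sub_mem _ (I_psi_left mu _ _ (ih _)) hw
        · rw [← mul_assoc, r_ypsi m i h1 h2, mul_assoc]
          exact I_psi_left mu _ _ (ih _)
    · rw [r_pbound i (by omega)]; simp

theorem psiList_y (mu : ℕ → ℕ) (a : List ℕ) : ∀ (x : NHc k l n), x ∈ cellIdeal k l n mu →
    (∀ m, x * y k l n m ∈ cellIdeal k l n mu) →
    ∀ m, x * psiList k l n a * y k l n m ∈ cellIdeal k l n mu := by
  induction a with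
  | nil => intro x hx hyx m; simpa [psiList] using hyx m
  | cons i a ih =>
    intro x hx hyx
    have e : x * psiList k l n (i :: a) = (x * psi k l n i) * psiList k l n a := by
      simp [psiList, mul_assoc]
    rw [e]
    apply ih _ (I_psi_right mu i x hx)
    intro m
    by_cases h : i + 1 < n
    · by_cases h1 : m = i
      · subst h1
        rw [mul_assoc, r_py m h, mul_add, mul_one, ← mul_assoc]
        exact Submodule.add_mem _ (I_psi_right mu _ _ (hyx _)) hx
      · by_cases h2 : m = i + 1
        · subst h2
          have : psi k l n i * y k l n (i+1) = y k l n i * psi k l n i - 1 := by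
            rw [r_yp i h]; simp
          rw [mul_assoc, this, mul_sub, mul_one, ← mul_assoc]
          exact Submodule.sub_mem _ (I_psi_right mu _ _ (hyx _)) hx
        · rw [mul_assoc, ← r_ypsi m i h1 h2, ← mul_assoc]
          exact I_psi_right mu _ _ (hyx _)
    · rw [r_pbound i (by omega)]; simp

theorem yLam_mem (mu lam : ℕ → ℕ) (hlam : IsPos l n lam) (hd : DomGT n lam mu) :
    yLam k l n lam ∈ cellIdeal k l n mu :=
  mon_mem' mu lam hlam hd _ (fun _ _ => le_rfl)

theorem I_y_left (mu : ℕ → ℕ) (i : ℕ) :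
    ∀ x ∈ cellIdeal k l n mu, y k l n i * x ∈ cellIdeal k l n mu := by
  intro x hx
  refine Submodule.span_induction ?_ ?_ ?_ ?_ hx
  · rintro x ⟨j, h1, h2, a, b, rfl⟩
    rw [← mul_assoc]
    apply I_psiList_right
    exact y_psiList mu _ (yLam_mem mu j h1 h2) (y_mul_yLam mu j h1 h2) a i
  · simp
  · intro x z _ _ hx hz
    rw [mul_add]; exact Submodule.add_mem _ hx hz
  · intro c x _ hx
    rw [mul_smul_comm]; exact Submodule.smul_mem _ _ hx

theorem I_y_right (mu : ℕ → ℕ) (i : ℕ) :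
    ∀ x ∈ cellIdeal k l n mu, x * y k l n i ∈ cellIdeal k l n mu := by
  intro x hx
  refine Submodule.span_induction ?_ ?_ ?_ ?_ hx
  · rintro x ⟨j, h1, h2, a, b, rfl⟩
    rw [mul_assoc, mul_assoc]
    apply I_psiList_left
    rw [← mul_assoc]
    exact psiList_y mu b _ (yLam_mem mu j h1 h2) (yLam_mul_y mu j h1 h2) i
  · simp
  · intro x z _ _ hx hz
    rw [add_mul]; exact Submodule.add_mem _ hx hz
  · intro c x _ hx
    rw [smul_mul_assoc]; exact Submodule.smul_mem _ _ hx

theorem D_pow (D : NHc k l n →ₗ[k] NHc k l n)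
    (hLeib : ∀ a b : NHc k l n, D (a * b) = D a * b + a * D b)
    (hy : ∀ i : ℕ, D (y k l n i) = y k l n i * y k l n i) (h1 : D 1 = 0) (i c : ℕ) :
    D (y k l n i ^ c) = y k l n i ^ c * (c • y k l n i) := by
  induction c with
  | zero => simp [h1]
  | succ c ih =>
    rw [pow_succ, hLeib, ih, hy, succ_nsmul, mul_add, mul_smul_comm, mul_smul_comm,
      smul_mul_assoc]
    simp only [mul_assoc]

theorem D_monL (D : NHc k l n →ₗ[k] NHc k l n)
    (hLeib : ∀ a b : NHc k l n, D (a * b) = D a * b + a * D b)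
    (hy : ∀ i : ℕ, D (y k l n i) = y k l n i * y k l n i) (h1 : D 1 = 0) (f : ℕ → ℕ)
    (L : List ℕ) :
    D (monL k l n L f) = monL k l n L f * (L.map (fun i => f i • y k l n i)).sum := by
  induction L with
  | nil => simp [monL, h1]
  | cons a L ih =>
    have hc := (comm_y_monL (k := k) (l := l) (n := n) L f a).smul_left (f a)
    have e : monL k l n (a :: L) f = y k l n a ^ f a * monL k l n L f := by simp [monL]
    rw [e, hLeib, ih, D_pow D hLeib hy h1, List.map_cons, List.sum_cons, mul_add, mul_assoc,
      hc.eq]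
    simp only [mul_assoc]

end main

end Stmt17

open Stmt17 in
/-- Let `l ≥ n ≥ 0` and let `μ ∈ P_n^l` be a partition.  Then the
derivation `∂` of the cyclotomic nilHecke algebra `NH_n^l` (with `∂(y i) = (y i)²` and
`∂(ψ i) = −(y i)(ψ i) − (ψ i)(y (i+1))`) preserves the two-sided ideal `(NH_n^l)^{>μ}`
spanned by the cellular basis elements `ψ_h^* y^λ ψ_t` over all partitions `λ > μ` in the
dominance order and tableaux `h, t` of shape `λ`. -/
theorem stmt_17 (k : Type*) [Field k] (p : ℕ) [Fact p.Prime] [CharP k p]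
    (l n : ℕ) (hln : n ≤ l) (mu : ℕ → ℕ) (hmu : IsPos l n mu)
    (D : NHc k l n →ₗ[k] NHc k l n)
    (hLeib : ∀ a b : NHc k l n, D (a * b) = D a * b + a * D b)
    (hy : ∀ i : ℕ, D (y k l n i) = y k l n i * y k l n i)
    (hpsi : ∀ i : ℕ, D (psi k l n i) =
      -(y k l n i * psi k l n i) - psi k l n i * y k l n (i+1)) :
    ∀ x ∈ cellIdeal k l n mu, D x ∈ cellIdeal k l n mu := by
  have h1 : D 1 = 0 := by
    have := hLeib 1 1
    simpa using this
  have hn1 : ∀ u v : NHc k l n, (-u) * v = -(u * v) := fun u v => neg_mul u v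
  have hn2 : ∀ u v : NHc k l n, u * (-v) = -(u * v) := fun u v => mul_neg u v
  have hPl : ∀ a : List ℕ, ∀ x ∈ cellIdeal k l n mu,
      D (psiList k l n a) * x ∈ cellIdeal k l n mu := by
    intro a
    induction a with
    | nil => intro x _; simp [psiList, h1]
    | cons i a ih =>
      intro x hx
      have e : psiList k l n (i :: a) = psi k l n i * psiList k l n a := by simp [psiList]
      have hw := I_psiList_left mu a x hx
      rw [e, hLeib, add_mul, hpsi, mul_assoc, mul_assoc, sub_mul, hn1, mul_assoc, mul_assoc]
      refine Submodule.add_mem _ (Submodule.sub_mem _ (Submodule.neg_mem _ ?_) ?_) ?_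
      · exact I_y_left mu _ _ (I_psi_left mu _ _ hw)
      · exact I_psi_left mu _ _ (I_y_left mu _ _ hw)
      · exact I_psi_left mu _ _ (ih x hx)
  have hPr : ∀ a : List ℕ, ∀ x ∈ cellIdeal k l n mu,
      x * D (psiList k l n a) ∈ cellIdeal k l n mu := by
    intro a
    induction a with
    | nil => intro x _; simp [psiList, h1]
    | cons i a ih =>
      intro x hx
      have e : psiList k l n (i :: a) = psi k l n i * psiList k l n a := by simp [psiList]
      rw [e, hLeib, mul_add, hpsi, ← mul_assoc, ← mul_assoc, mul_sub, hn2, ← mul_assoc,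
        ← mul_assoc]
      refine Submodule.add_mem _ (I_psiList_right mu a _
        (Submodule.sub_mem _ (Submodule.neg_mem _ ?_) ?_)) ?_
      · exact I_psi_right mu _ _ (I_y_right mu _ _ hx)
      · exact I_y_right mu _ _ (I_psi_right mu _ _ hx)
      · exact ih _ (I_psi_right mu _ _ hx)
  intro x hx
  refine Submodule.span_induction ?_ ?_ ?_ ?_ hx
  · rintro x ⟨j, hj1, hj2, a, b, rfl⟩
    have hm := yLam_mem (k := k) mu j hj1 hj2
    have hD : D (yLam k l n j) ∈ cellIdeal k l n mu := by
      have e : yLam k l n j = monL k l n (List.range n) (fun i => l - 1 - j i) := rfl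
      rw [e, D_monL D hLeib hy h1, ← e]
      generalize List.range n = L
      induction L with
      | nil => simp
      | cons i L ih =>
        rw [List.map_cons, List.sum_cons, mul_add, mul_smul_comm]
        exact Submodule.add_mem _ (nsmul_mem (I_y_right mu _ _ hm) _) ih
    rw [hLeib, hLeib, add_mul]
    refine Submodule.add_mem _ (Submodule.add_mem _ ?_ ?_) ?_
    · exact I_psiList_right mu b _ (hPl a _ hm)
    · exact I_psiList_right mu b _ (I_psiList_left mu a _ hD)
    · exact hPr b _ (I_psiList_left mu a _ hm)
  · simp
  · intro x z _ _ hx hz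
    rw [map_add]; exact Submodule.add_mem _ hx hz
  · intro c x _ hx
    rw [map_smul]; exact Submodule.smul_mem _ _ hx
end
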